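/- arXiv:2507.07065 — 3 statements merged into one kernel-verified Lean document; each statement's English description precedes it below -/
import Mathlib

section
/- Let A, B be positive semidefinite matrices with B invertible and α > 1. Then ∫₀^∞ Tr[B (B + t·1)⁻¹ (A (B + t·1)⁻¹)^α] dt = ((α-1)/α) ∫₀^∞ Tr[(A (B + t·1)⁻¹)^α] dt, where the trace of the non-Hermitian power is interpreted as Tr[((B+t)^{-1/2} A (B+t)^{-1/2})^α · (similarity-related factors)], i.e., Tr[(A(B+t·1)⁻¹)^α] := Tr[((B+t·1)^{-1/2} A (B+t·1)^{-1/2})^α]. -/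
open MeasureTheory Matrix
open scoped ComplexOrder
noncomputable section

/-- The positive part `(X)₊` of a Hermitian matrix, via continuous functional calculus. -/
def mposPart {n : ℕ} (X : Matrix (Fin n) (Fin n) ℂ) : Matrix (Fin n) (Fin n) ℂ :=
  cfc (fun x : ℝ => max x 0) X

/-- The spectral projection of a Hermitian matrix onto its strictly positive part,
so that `projPos (A - γ • B)` is the projection `{A > γB}`. -/
def projPos {n : ℕ} (X : Matrix (Fin n) (Fin n) ℂ) : Matrix (Fin n) (Fin n) ℂ :=
  cfc (fun x : ℝ => if 0 < x then (1:ℝ) else 0) X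

/-- The spectral projection of a Hermitian matrix onto its nonnegative part,
so that `projNonneg (γ • B - A)` is the projection `{A ≤ γB}`. -/
def projNonneg {n : ℕ} (X : Matrix (Fin n) (Fin n) ℂ) : Matrix (Fin n) (Fin n) ℂ :=
  cfc (fun x : ℝ => if 0 ≤ x then (1:ℝ) else 0) X

/-- Matrix logarithm via functional calculus. -/
def mlog {n : ℕ} (X : Matrix (Fin n) (Fin n) ℂ) : Matrix (Fin n) (Fin n) ℂ :=
  cfc Real.log X

/-- Real matrix power via functional calculus (`Real.rpow`, so negative powers of
positive semidefinite matrices are taken on the support). -/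
def mpow {n : ℕ} (X : Matrix (Fin n) (Fin n) ℂ) (a : ℝ) : Matrix (Fin n) (Fin n) ℂ :=
  cfc (fun x : ℝ => x ^ a) X
section helpers
open scoped Matrix.Norms.L2Operator MatrixOrder

lemma aux_continuousOn_spectrum {n : ℕ} (X : Matrix (Fin n) (Fin n) ℂ) (f : ℝ → ℝ) :
    ContinuousOn f (spectrum ℝ X) :=
  (Matrix.finite_real_spectrum (A := X)).continuousOn f

lemma aux_trace_cfc_mul_cfc {n : ℕ} {X Y : Matrix (Fin n) (Fin n) ℂ}
    (hX : X.IsHermitian) (hY : Y.IsHermitian) :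
    ∃ w : Fin n → Fin n → ℝ, (∀ i j, 0 ≤ w i j) ∧ ∀ φ ψ : ℝ → ℝ,
      (trace (cfc φ X * cfc ψ Y)).re =
        ∑ i, ∑ j, w i j * (φ (hX.eigenvalues i) * ψ (hY.eigenvalues j)) := by
  let W : Matrix (Fin n) (Fin n) ℂ :=
    star (hX.eigenvectorUnitary : Matrix (Fin n) (Fin n) ℂ) * hY.eigenvectorUnitary
  refine ⟨fun i j => Complex.normSq (W i j), fun i j => Complex.normSq_nonneg _, fun φ ψ => ?_⟩
  rw [hX.cfc_eq, hY.cfc_eq, IsHermitian.cfc, IsHermitian.cfc, Unitary.conjStarAlgAut_apply,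
    Unitary.conjStarAlgAut_apply]
  have : trace ((hX.eigenvectorUnitary : Matrix (Fin n) (Fin n) ℂ) *
      diagonal (RCLike.ofReal ∘ φ ∘ hX.eigenvalues) *
      star (hX.eigenvectorUnitary : Matrix (Fin n) (Fin n) ℂ) *
      ((hY.eigenvectorUnitary : Matrix (Fin n) (Fin n) ℂ) *
      diagonal (RCLike.ofReal ∘ ψ ∘ hY.eigenvalues) *
      star (hY.eigenvectorUnitary : Matrix (Fin n) (Fin n) ℂ))) =
      trace (diagonal (RCLike.ofReal ∘ φ ∘ hX.eigenvalues) * (W *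
      diagonal (RCLike.ofReal ∘ ψ ∘ hY.eigenvalues) * Wᴴ)) := by
    rw [mul_assoc, mul_assoc, trace_mul_comm]
    simp only [W, ← star_eq_conjTranspose, star_mul, star_star, mul_assoc]
  rw [this]
  simp only [trace, diag_apply, diagonal_mul, Complex.re_sum]
  refine Finset.sum_congr rfl fun i _ => ?_
  rw [mul_apply, Finset.mul_sum, Complex.re_sum]
  refine Finset.sum_congr rfl fun j _ => ?_
  simp only [mul_diagonal, conjTranspose_apply, Function.comp_apply]
  have : W i j * star (W i j) = ((Complex.normSq (W i j) : ℝ) : ℂ) := Complex.mul_conj _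
  calc _ = (((φ (hX.eigenvalues i) * ψ (hY.eigenvalues j) : ℝ) : ℂ) * 
        (W i j * star (W i j))).re := by push_cast; congr 1; simp only [Complex.coe_algebraMap]; ring
    _ = _ := by rw [this, ← Complex.ofReal_mul, Complex.ofReal_re]; ring

lemma aux_bern (α x y : ℝ) (hα : 1 < α) (hx : 0 ≤ x) (hy : 0 ≤ y) :
    0 ≤ x ^ α - y ^ α - α * y ^ (α - 1) * (x - y) := by
  rcases hy.eq_or_lt with rfl | hy
  · rw [Real.zero_rpow (by linarith), Real.zero_rpow (by linarith)]
    have := Real.rpow_nonneg hx α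
    simpa
  · have h := one_add_mul_self_le_rpow_one_add (s := x / y - 1) (p := α)
      (by have := div_nonneg hx hy.le; linarith) hα.le
    rw [add_sub_cancel, Real.div_rpow hx hy.le] at h
    have hp : 0 < y ^ α := Real.rpow_pos_of_pos hy α
    rw [le_div_iff₀ hp] at h
    have e : y ^ α = y ^ (α - 1) * y := by
      rw [← Real.rpow_add_one hy.ne']; simp
    have : (1 + α * (x / y - 1)) * y ^ α = y ^ α + α * y ^ (α-1) * (x - y) := by
      rw [e]; field_simp
    linarith

lemma aux_klein {n : ℕ} {X Y : Matrix (Fin n) (Fin n) ℂ} (α : ℝ) (hα : 1 < α)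
    (hX : X.PosSemidef) (hY : Y.PosSemidef) :
    (trace (cfc (fun x : ℝ => α * x ^ (α - 1)) Y * (X - Y))).re ≤
      (trace (mpow X α)).re - (trace (mpow Y α)).re := by
  obtain ⟨w, hw, H⟩ := aux_trace_cfc_mul_cfc hX.1 hY.1
  have hXs : IsSelfAdjoint X := hX.1
  have hYs : IsSelfAdjoint Y := hY.1
  have e1 := H (fun x => x ^ α) (fun _ => 1)
  have e2 := H (fun _ => 1) (fun x => x ^ α)
  have e3 := H (fun x => x) (fun x => α * x ^ (α - 1))
  have e4 := H (fun _ => 1) (fun x => (α * x ^ (α - 1)) * x)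
  rw [cfc_const_one ℝ Y, mul_one] at e1
  rw [cfc_const_one ℝ X, one_mul] at e2 e4
  rw [cfc_id' ℝ X] at e3
  rw [cfc_mul _ _ Y (aux_continuousOn_spectrum _ _) (aux_continuousOn_spectrum _ _),
    cfc_id' ℝ Y] at e4
  rw [mul_sub, trace_sub, Complex.sub_re, trace_mul_comm _ X, e3, e4, mpow, mpow, e1, e2]
  rw [← sub_nonneg]
  simp only [← Finset.sum_sub_distrib]
  refine Finset.sum_nonneg fun i _ => Finset.sum_nonneg fun j _ => ?_
  have := mul_nonneg (hw i j) (aux_bern α _ _ hα (hX.eigenvalues_nonneg i) (hY.eigenvalues_nonneg j))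
  linarith

lemma aux_cfc_comm {n : ℕ} (X : Matrix (Fin n) (Fin n) ℂ) (g : ℝ → ℝ) :
    cfc g (X * Xᴴ) * X = X * cfc g (Xᴴ * X) := by
  have h1 : IsSelfAdjoint (X * Xᴴ) := isHermitian_mul_conjTranspose_self X
  have h2 : IsSelfAdjoint (Xᴴ * X) := isHermitian_conjTranspose_mul_self X
  let s : Finset ℝ := (Matrix.finite_real_spectrum (A := X * Xᴴ)).toFinset ∪
    (Matrix.finite_real_spectrum (A := Xᴴ * X)).toFinset
  let p : Polynomial ℝ := Lagrange.interpolate s id g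
  have hp : ∀ x ∈ s, p.eval x = g x := fun x hx =>
    Lagrange.eval_interpolate_at_node (v := id) g (Set.injOn_id _) hx
  rw [cfc_congr (g := p.eval) (fun x hx => (hp x (by simp [s, hx])).symm),
    cfc_congr (a := Xᴴ * X) (g := p.eval) (fun x hx => (hp x (by simp [s, hx])).symm),
    cfc_polynomial p _ h1, cfc_polynomial p _ h2]
  generalize p = q
  induction q using Polynomial.induction_on' with
  | add p q hp hq => simp only [map_add, add_mul, mul_add, hp, hq]
  | monomial k a =>
    simp only [Polynomial.aeval_monomial, Algebra.algebraMap_eq_smul_one, smul_mul_assoc, one_mul, mul_smul_comm]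
    congr 1
    induction k with
    | zero => simp
    | succ k ih =>
      rw [pow_succ', pow_succ', mul_assoc, ih]
      simp only [mul_assoc]

lemma aux_rpow_split (α x : ℝ) (hα : 1 < α) (hx : 0 ≤ x) : x ^ α = x ^ (α - 1) * x := by
  rcases hx.eq_or_lt with rfl | hx
  · rw [mul_zero, Real.zero_rpow (by linarith)]
  · rw [← Real.rpow_add_one hx.ne']; simp

lemma aux_spec_nonneg {n : ℕ} {X : Matrix (Fin n) (Fin n) ℂ} (hX : X.PosSemidef) {x : ℝ}
    (hx : x ∈ spectrum ℝ X) : 0 ≤ x := by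
  rw [hX.1.spectrum_real_eq_range_eigenvalues] at hx
  obtain ⟨i, rfl⟩ := hx
  exact hX.eigenvalues_nonneg i

lemma aux_mpow_split {n : ℕ} {X : Matrix (Fin n) (Fin n) ℂ} (α : ℝ) (hα : 1 < α)
    (hX : X.PosSemidef) : mpow X α = cfc (fun x : ℝ => x ^ (α - 1)) X * X := by
  have hXs : IsSelfAdjoint X := hX.1
  nth_rw 3 [← cfc_id' ℝ X]
  rw [← cfc_mul _ _ X (aux_continuousOn_spectrum _ _) (aux_continuousOn_spectrum _ _), mpow]
  exact cfc_congr fun x hx => aux_rpow_split α x hα (aux_spec_nonneg hX hx)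

lemma aux_mpow_split' {n : ℕ} {X : Matrix (Fin n) (Fin n) ℂ} (α : ℝ) (hα : 1 < α)
    (hX : X.PosSemidef) : mpow X α = X * cfc (fun x : ℝ => x ^ (α - 1)) X := by
  rw [aux_mpow_split α hα hX]
  have hXs : IsSelfAdjoint X := hX.1
  have := (cfc_commute_cfc (fun x : ℝ => x ^ (α - 1)) id X).eq
  rwa [cfc_id ℝ X] at this

lemma aux_trace_mpow_comm {n : ℕ} (X : Matrix (Fin n) (Fin n) ℂ) (α : ℝ) (hα : 1 < α) :
    trace (mpow (X * Xᴴ) α) = trace (mpow (Xᴴ * X) α) := by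
  rw [aux_mpow_split α hα (posSemidef_self_mul_conjTranspose X), ← mul_assoc, aux_cfc_comm,
    trace_mul_comm, ← mul_assoc, aux_mpow_split' α hα (posSemidef_conjTranspose_mul_self X)]

/-- rewriting the derivative -/
lemma aux_trace_deriv {n : ℕ} (X T : Matrix (Fin n) (Fin n) ℂ) (α : ℝ) (hα : 1 < α) :
    trace (cfc (fun x : ℝ => α * x ^ (α - 1)) (X * Xᴴ) * (X * T * Xᴴ)) =
      α * trace (T * mpow (Xᴴ * X) α) := by
  rw [← mul_assoc, ← mul_assoc, aux_cfc_comm, 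
    cfc_const_mul _ _ _ (aux_continuousOn_spectrum _ _),
    trace_mul_comm, ← mul_assoc, ← mul_assoc, mul_smul_comm,
    ← aux_mpow_split' α hα (posSemidef_conjTranspose_mul_self X), smul_mul_assoc, trace_smul,
    trace_mul_comm]
  simp

lemma aux_trace_mpow {n : ℕ} {X : Matrix (Fin n) (Fin n) ℂ} (hX : X.IsHermitian) (α : ℝ) :
    (trace (mpow X α)).re = ∑ i, (hX.eigenvalues i) ^ α := by
  rw [mpow, hX.cfc_eq, IsHermitian.cfc, Unitary.conjStarAlgAut_apply, trace_mul_cycle]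
  simp [trace]

lemma aux_spec_le {n : ℕ} (X : Matrix (Fin n) (Fin n) ℂ) {x : ℝ}
    (hx : x ∈ spectrum ℝ X) : x ≤ ‖X‖ * ‖(1 : Matrix (Fin n) (Fin n) ℂ)‖ :=
  (le_abs_self x).trans (spectrum.norm_le_norm_mul_of_mem hx)

lemma aux_trace_mpow_le {n : ℕ} {X : Matrix (Fin n) (Fin n) ℂ} (hX : X.PosSemidef) (α : ℝ)
    (hα : 1 < α) : (trace (mpow X α)).re ≤ n * (‖X‖ * ‖(1 : Matrix (Fin n) (Fin n) ℂ)‖) ^ α := by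
  rw [aux_trace_mpow hX.1]
  refine (Finset.sum_le_card_nsmul _ _ ((‖X‖ * ‖(1 : Matrix (Fin n) (Fin n) ℂ)‖) ^ α)
    fun i _ => ?_).trans (by simp)
  exact Real.rpow_le_rpow (hX.eigenvalues_nonneg i)
    (aux_spec_le X (hX.1.eigenvalues_mem_spectrum_real i)) (by linarith)

lemma aux_mpow_posSemidef {n : ℕ} {X : Matrix (Fin n) (Fin n) ℂ} (hX : X.PosSemidef) (α : ℝ) :
    (mpow X α).PosSemidef := by
  rw [← Matrix.nonneg_iff_posSemidef]
  exact cfc_nonneg fun x hx => Real.rpow_nonneg (aux_spec_nonneg hX hx) _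

lemma aux_factor {n : ℕ} {A : Matrix (Fin n) (Fin n) ℂ} (hA : A.PosSemidef) :
    ∃ L : Matrix (Fin n) (Fin n) ℂ, A = Lᴴ * L := by
  rw [← Matrix.nonneg_iff_posSemidef] at hA
  exact CStarAlgebra.nonneg_iff_eq_star_mul_self.1 hA

lemma aux_trace_mul_nonneg {n : ℕ} {X Y : Matrix (Fin n) (Fin n) ℂ} (hX : X.PosSemidef)
    (hY : Y.PosSemidef) : 0 ≤ (trace (X * Y)).re := by
  obtain ⟨L, rfl⟩ := aux_factor hX
  rw [mul_assoc, trace_mul_comm]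
  exact (Complex.nonneg_iff.1 (hY.mul_mul_conjTranspose_same L).trace_nonneg).1

lemma aux_exists_lower {n : ℕ} {B : Matrix (Fin n) (Fin n) ℂ} (hB : B.PosDef) :
    ∃ b : ℝ, 0 < b ∧ ∀ x ∈ spectrum ℝ B, b ≤ x := by
  rw [hB.1.spectrum_real_eq_range_eigenvalues]
  rcases isEmpty_or_nonempty (Fin n) with h | h
  · exact ⟨1, one_pos, by rintro _ ⟨i, rfl⟩; exact h.elim i⟩
  · obtain ⟨i, hi⟩ := Finite.exists_min hB.1.eigenvalues
    exact ⟨_, hB.eigenvalues_pos i, by rintro _ ⟨j, rfl⟩; exact hi j⟩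

lemma aux_spec_shift {n : ℕ} {B : Matrix (Fin n) (Fin n) ℂ} {b t x : ℝ}
    (hb : ∀ x ∈ spectrum ℝ B, b ≤ x) (hx : x ∈ spectrum ℝ (B + t • 1)) : b + t ≤ x := by
  rw [← Algebra.algebraMap_eq_smul_one, add_comm, ← spectrum.singleton_add_eq] at hx
  obtain ⟨y, hy, z, hz, rfl⟩ := hx
  simp only [Set.mem_singleton_iff] at hy
  subst hy
  have := hb z hz
  show b + y ≤ y + z
  linarith

lemma aux_S {n : ℕ} {B : Matrix (Fin n) (Fin n) ℂ} (hB : B.PosDef) {b t : ℝ} (hb0 : 0 < b)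
    (hb : ∀ x ∈ spectrum ℝ B, b ≤ x) (ht : 0 ≤ t) :
    (mpow (B + t • 1) (-(1/2)))ᴴ = mpow (B + t • 1) (-(1/2)) ∧
    mpow (B + t • 1) (-(1/2)) * B * mpow (B + t • 1) (-(1/2)) =
      1 - t • (mpow (B + t • 1) (-(1/2)) * mpow (B + t • 1) (-(1/2))) ∧
    (B + t • 1) * (mpow (B + t • 1) (-(1/2)) * mpow (B + t • 1) (-(1/2))) = 1 ∧
    (mpow (B + t • 1) (-(1/2)) * mpow (B + t • 1) (-(1/2))) * (B + t • 1) = 1 ∧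
    ‖mpow (B + t • 1) (-(1/2)) * mpow (B + t • 1) (-(1/2))‖ ≤ (b + t)⁻¹ ∧
    ‖mpow (B + t • 1) (-(1/2))‖ * ‖mpow (B + t • 1) (-(1/2))‖ ≤ (b + t)⁻¹ := by
  have hBt : IsSelfAdjoint (B + t • 1) := by
    have : IsSelfAdjoint B := hB.1
    exact this.add (IsSelfAdjoint.smul (IsSelfAdjoint.all t) (IsSelfAdjoint.one _))
  set Y := B + t • 1 with hY
  have hS : mpow Y (-(1/2)) = cfc (fun x : ℝ => x ^ (-(1/2) : ℝ)) Y := rfl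
  have hsa : IsSelfAdjoint (mpow Y (-(1/2))) := cfc_predicate _ _
  set S := mpow Y (-(1/2)) with hSdef
  have hpos : ∀ x ∈ spectrum ℝ Y, b + t ≤ x := fun x hx => aux_spec_shift hb hx
  have key : ∀ x ∈ spectrum ℝ Y, x * (x ^ (-(1/2) : ℝ) * x ^ (-(1/2) : ℝ)) = 1 := by
    intro x hx
    have hx0 : 0 < x := by linarith [hpos x hx]
    rw [← Real.rpow_add hx0]
    norm_num
    rw [Real.rpow_neg_one, mul_inv_cancel₀ hx0.ne']
  have hYS : Y * S = S * Y := by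
    have := (cfc_commute_cfc id (fun x : ℝ => x ^ (-(1/2) : ℝ)) Y).eq
    rwa [cfc_id ℝ Y] at this
  have h1 : Y * (S * S) = 1 := by
    nth_rw 1 [← cfc_id' ℝ Y]
    rw [hS, ← cfc_mul _ _ Y (aux_continuousOn_spectrum _ _) (aux_continuousOn_spectrum _ _),
      ← cfc_mul _ _ Y (aux_continuousOn_spectrum _ _) (aux_continuousOn_spectrum _ _),
      ← cfc_one ℝ Y]
    exact cfc_congr fun x hx => key x hx
  have h2 : (S * S) * Y = 1 := by
    rw [mul_assoc, ← hYS, ← mul_assoc, ← hYS, mul_assoc, h1]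
  have hn : ‖S * S‖ ≤ (b + t)⁻¹ := by
    rw [hS, ← cfc_mul _ _ Y (aux_continuousOn_spectrum _ _) (aux_continuousOn_spectrum _ _)]
    refine norm_cfc_le (by positivity) fun x hx => ?_
    have hx0 : 0 < x := by linarith [hpos x hx]
    have : x ^ (-(1/2) : ℝ) * x ^ (-(1/2) : ℝ) = x⁻¹ := eq_inv_of_mul_eq_one_right (key x hx)
    rw [this, Real.norm_of_nonneg (by positivity)]
    exact inv_anti₀ (by positivity) (hpos x hx)
  refine ⟨hsa, ?_, h1, h2, hn, ?_⟩
  · have : S * Y * S = 1 := by rw [← hYS, mul_assoc, h1]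
    rw [← this, hY]
    simp only [mul_add, add_mul, mul_smul_comm, smul_mul_assoc, mul_one]
    abel
  · have := CStarRing.norm_star_mul_self (x := S)
    rw [hsa.star_eq] at this
    rwa [← this]

lemma aux_hasDerivAt {n : ℕ} (L : Matrix (Fin n) (Fin n) ℂ) (R : ℝ → Matrix (Fin n) (Fin n) ℂ)
    (b : ℝ) (hb : 0 < b)
    (hR : ∀ s, 0 < s → ‖R s‖ ≤ b⁻¹) (hpsd : ∀ s, 0 < s → (L * R s * Lᴴ).PosSemidef)
    (hres : ∀ s t, 0 < s → 0 < t → R s - R t = (-(s - t)) • (R s * R t))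
    (α : ℝ) (hα : 1 < α) {t : ℝ} (ht : 0 < t) :
    HasDerivAt (fun s => (trace (mpow (L * R s * Lᴴ) α)).re)
      (-(trace (cfc (fun x : ℝ => α * x ^ (α - 1)) (L * R t * Lᴴ) *
        (L * (R t * R t) * Lᴴ))).re) t := by
  have hev : ∀ᶠ s in nhds t, 0 < s := lt_mem_nhds ht
  have hRc : ContinuousAt R t := by
    rw [ContinuousAt, tendsto_iff_norm_sub_tendsto_zero]
    have h0 : Filter.Tendsto (fun s : ℝ => |s - t| * (b⁻¹ * b⁻¹)) (nhds t) (nhds 0) := by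
      have : Continuous (fun s : ℝ => |s - t| * (b⁻¹ * b⁻¹)) := by fun_prop
      simpa using this.tendsto t
    refine squeeze_zero' (Filter.Eventually.of_forall fun _ => norm_nonneg _) ?_ h0
    filter_upwards [hev] with s hs
    rw [hres s t hs ht, norm_smul, norm_neg, Real.norm_eq_abs]
    refine mul_le_mul_of_nonneg_left ((norm_mul_le _ _).trans ?_) (abs_nonneg _)
    exact mul_le_mul (hR s hs) (hR t ht) (norm_nonneg _) (by positivity)
  have hNc : ContinuousAt (fun s => L * R s * Lᴴ) t :=
    (continuousAt_const.mul hRc).mul continuousAt_const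
  have hGc : ContinuousAt (fun s => cfc (fun x : ℝ => α * x ^ (α - 1)) (L * R s * Lᴴ)) t := by
    refine ContinuousAt.cfc (s := Set.Icc 0 (‖L‖ * b⁻¹ * ‖Lᴴ‖ *
      ‖(1 : Matrix (Fin n) (Fin n) ℂ)‖)) isCompact_Icc _ hNc ?_ ?_ ?_
    · filter_upwards [hev] with s hs x hx
      refine ⟨aux_spec_nonneg (hpsd s hs) hx, (aux_spec_le _ hx).trans ?_⟩
      refine mul_le_mul_of_nonneg_right ?_ (norm_nonneg _)
      refine (norm_mul_le _ _).trans (mul_le_mul_of_nonneg_right ?_ (norm_nonneg _))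
      exact (norm_mul_le _ _).trans (mul_le_mul_of_nonneg_left (hR s hs) (norm_nonneg _))
    · filter_upwards [hev] with s hs
      exact (hpsd s hs).1
    · exact (continuous_const.mul
        (Real.continuous_rpow_const (by linarith : 0 ≤ α - 1))).continuousOn
  have htr : Continuous (fun M : Matrix (Fin n) (Fin n) ℂ => (trace M).re) :=
    Complex.continuous_re.comp (continuous_id.matrix_trace)
  set G : ℝ → Matrix (Fin n) (Fin n) ℂ :=
    fun s => cfc (fun x : ℝ => α * x ^ (α - 1)) (L * R s * Lᴴ) with hG
  have hD : ContinuousAt (fun s => L * (R s * R t) * Lᴴ) t :=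
    (continuousAt_const.mul (hRc.mul continuousAt_const)).mul continuousAt_const
  have hu : ContinuousAt (fun s => -(trace (G t * (L * (R s * R t) * Lᴴ))).re) t :=
    (htr.continuousAt.comp (continuousAt_const.mul hD)).neg
  have hv : ContinuousAt (fun s => -(trace (G s * (L * (R s * R t) * Lᴴ))).re) t :=
    (htr.continuousAt.comp (hGc.mul hD)).neg
  have hdiff : ∀ s, 0 < s → L * R s * Lᴴ - L * R t * Lᴴ =
      (-(s - t)) • (L * (R s * R t) * Lᴴ) := by
    intro s hs
    rw [← sub_mul, ← mul_sub, hres s t hs ht]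
    simp only [mul_smul_comm, smul_mul_assoc]
  have hlow : ∀ s, 0 < s → (s - t) * (-(trace (G t * (L * (R s * R t) * Lᴴ))).re) ≤
      (trace (mpow (L * R s * Lᴴ) α)).re - (trace (mpow (L * R t * Lᴴ) α)).re := by
    intro s hs
    have := aux_klein α hα (hpsd s hs) (hpsd t ht)
    rw [hdiff s hs, mul_smul_comm, trace_smul, Complex.smul_re, smul_eq_mul] at this
    linarith
  have hup : ∀ s, 0 < s → 
      (trace (mpow (L * R s * Lᴴ) α)).re - (trace (mpow (L * R t * Lᴴ) α)).re ≤ 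
      (s - t) * (-(trace (G s * (L * (R s * R t) * Lᴴ))).re) := by
    intro s hs
    have := aux_klein α hα (hpsd t ht) (hpsd s hs)
    rw [← neg_sub (L * R s * Lᴴ), hdiff s hs, mul_neg, trace_neg, mul_smul_comm, trace_smul, Complex.neg_re,
      Complex.smul_re, smul_eq_mul] at this
    linarith
  rw [hasDerivAt_iff_tendsto_slope]
  have hmin := (hu.tendsto.min hv.tendsto).mono_left (nhdsWithin_le_nhds (s := {t}ᶜ))
  have hmax := (hu.tendsto.max hv.tendsto).mono_left (nhdsWithin_le_nhds (s := {t}ᶜ))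
  rw [min_self] at hmin
  rw [max_self] at hmax
  have hev' : ∀ᶠ s in nhdsWithin t {t}ᶜ, 0 < s ∧ s ≠ t :=
    (hev.filter_mono nhdsWithin_le_nhds).and self_mem_nhdsWithin
  refine tendsto_of_tendsto_of_tendsto_of_le_of_le' hmin hmax ?_ ?_
  · filter_upwards [hev'] with s hs
    rw [slope_def_field]
    rcases lt_or_gt_of_ne hs.2 with h | h
    · refine (min_le_right _ _).trans ?_
      rw [le_div_iff_of_neg (by linarith)]
      linarith [hup s hs.1]
    · refine (min_le_left _ _).trans ?_
      rw [le_div_iff₀ (by linarith)]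
      linarith [hlow s hs.1]
  · filter_upwards [hev'] with s hs
    rw [slope_def_field]
    rcases lt_or_gt_of_ne hs.2 with h | h
    · refine le_trans ?_ (le_max_left _ _)
      rw [div_le_iff_of_neg (by linarith)]
      linarith [hlow s hs.1]
    · refine le_trans ?_ (le_max_right _ _)
      rw [div_le_iff₀ (by linarith)]
      linarith [hup s hs.1]

/-- The scalar integration-by-parts argument. -/
lemma aux_integral (f q : ℝ → ℝ) (α b D : ℝ) (hα : 1 < α) (hb : 0 < b)
    (hf0 : ∀ t, 0 ≤ t → 0 ≤ f t) (hq0 : ∀ t, 0 < t → 0 ≤ q t)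
    (hh0 : ∀ t, 0 < t → 0 ≤ f t - t * q t)
    (hfD : ∀ t, 0 ≤ t → f t ≤ D * (t + b) ^ (-α))
    (hd : ∀ t, 0 < t → HasDerivAt f (-(α * q t)) t) :
    ∫ t in Set.Ioi (0:ℝ), (f t - t * q t) = ((α - 1) / α) * ∫ t in Set.Ioi (0:ℝ), f t := by
  have hα0 : α ≠ 0 := by linarith
  have hfc : ContinuousOn f (Set.Ioi 0) := fun t ht => (hd t ht).continuousAt.continuousWithinAt
  have hfm : AEStronglyMeasurable f (volume.restrict (Set.Ioi 0)) :=
    hfc.aestronglyMeasurable measurableSet_Ioi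
  have hdom : IntegrableOn (fun t : ℝ => D * (t + b) ^ (-α)) (Set.Ioi 0) :=
    (integrableOn_add_rpow_Ioi_of_lt (by linarith) (by linarith)).const_mul D
  have hfi : IntegrableOn f (Set.Ioi 0) := by
    refine Integrable.mono' hdom hfm ?_
    filter_upwards [ae_restrict_mem measurableSet_Ioi] with t ht
    rw [Real.norm_of_nonneg (hf0 t (le_of_lt ht))]
    exact hfD t (le_of_lt ht)
  have hhm : AEStronglyMeasurable (fun t => f t - t * q t) (volume.restrict (Set.Ioi 0)) := by
    have h1 : AEStronglyMeasurable (fun t => f t + t * (α⁻¹ * deriv f t))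
        (volume.restrict (Set.Ioi 0)) :=
      hfm.add (measurable_id.mul
        ((measurable_deriv f).const_mul α⁻¹)).aestronglyMeasurable
    refine h1.congr ?_
    filter_upwards [ae_restrict_mem measurableSet_Ioi] with t ht
    rw [(hd t ht).deriv]
    field_simp
    ring
  have hhi : IntegrableOn (fun t => f t - t * q t) (Set.Ioi 0) := by
    refine Integrable.mono' hfi hhm ?_
    filter_upwards [ae_restrict_mem measurableSet_Ioi] with t ht
    rw [Real.norm_of_nonneg (hh0 t ht)]
    have := mul_nonneg (le_of_lt ht) (hq0 t ht)
    linarith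
  have hbound : ∀ t, 0 ≤ t → t * f t ≤ D * (t + b) ^ (-α) * t := fun t ht => by
    rw [mul_comm]; exact mul_le_mul_of_nonneg_right (hfD t ht) ht
  have hD0 : 0 ≤ D := by
    have h1 := (hf0 0 le_rfl).trans (hfD 0 le_rfl)
    have h2 : 0 < (0 + b) ^ (-α) := Real.rpow_pos_of_pos (by linarith) _
    exact nonneg_of_mul_nonneg_left h1 h2
  have hcont : ContinuousWithinAt (fun t => t * f t) (Set.Ici 0) 0 := by
    have h0 : Filter.Tendsto (fun t : ℝ => D * (t + b) ^ (-α) * t)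
        (nhdsWithin 0 (Set.Ici 0)) (nhds 0) := by
      have : ContinuousAt (fun t : ℝ => D * (t + b) ^ (-α) * t) 0 := by
        refine ContinuousAt.mul (continuousAt_const.mul
          (ContinuousAt.rpow_const (by fun_prop) (Or.inl (by simp; exact hb.ne')))) continuousAt_id
      simpa using this.tendsto.mono_left nhdsWithin_le_nhds
    rw [ContinuousWithinAt, zero_mul]
    refine squeeze_zero' ?_ ?_ h0
    · filter_upwards [self_mem_nhdsWithin] with t ht using mul_nonneg ht (hf0 t ht)
    · filter_upwards [self_mem_nhdsWithin] with t ht using hbound t ht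
  have htend : Filter.Tendsto (fun t => t * f t) Filter.atTop (nhds 0) := by
    have h0 : Filter.Tendsto (fun t : ℝ => D * (t + b) ^ (-(α - 1))) Filter.atTop (nhds 0) := by
      have h1 := (tendsto_rpow_neg_atTop (by linarith : 0 < α - 1)).comp
        (Filter.tendsto_atTop_add_const_right Filter.atTop b Filter.tendsto_id)
      simpa using h1.const_mul D
    refine squeeze_zero' ?_ ?_ h0
    · filter_upwards [Filter.eventually_ge_atTop 0] with t ht using mul_nonneg ht (hf0 t ht)
    · filter_upwards [Filter.eventually_ge_atTop 0] with t ht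
      refine (hbound t ht).trans ?_
      have e : (t + b) ^ (-(α - 1)) = (t + b) ^ (-α) * (t + b) := by
        rw [← Real.rpow_add_one (by linarith)]; ring_nf
      rw [e, ← mul_assoc]
      exact mul_le_mul_of_nonneg_left (by linarith)
        (mul_nonneg hD0 (Real.rpow_nonneg (by linarith) _))
  have hder : ∀ t ∈ Set.Ioi (0:ℝ), HasDerivAt (fun t => t * f t)
      (α * (f t - t * q t) - (α - 1) * f t) t := by
    intro t ht
    have := (hasDerivAt_id t).mul (hd t ht)
    refine this.congr_deriv ?_
    simp only [id]
    ring
  have hint := integral_Ioi_of_hasDerivAt_of_tendsto hcont hder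
    ((hhi.const_mul α).sub (hfi.const_mul (α - 1))) htend
  rw [integral_sub (hhi.const_mul α) (hfi.const_mul (α - 1)), integral_const_mul,
    integral_const_mul, zero_mul, sub_zero] at hint
  field_simp
  linarith

lemma aux_main {n : ℕ} (L B : Matrix (Fin n) (Fin n) ℂ)
    (hA : (Lᴴ * L).PosSemidef) (hB : B.PosDef) (b : ℝ) (hb0 : 0 < b)
    (hb : ∀ x ∈ spectrum ℝ B, b ≤ x) (α : ℝ) (hα : 1 < α) :
    ∫ t in Set.Ioi (0:ℝ),
        (Matrix.trace (mpow (B + t • 1) (-(1/2)) * B * mpow (B + t • 1) (-(1/2)) *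
          mpow (mpow (B + t • 1) (-(1/2)) * (Lᴴ * L) * mpow (B + t • 1) (-(1/2))) α)).re
      = ((α - 1) / α) *
        ∫ t in Set.Ioi (0:ℝ),
          (Matrix.trace
            (mpow (mpow (B + t • 1) (-(1/2)) * (Lᴴ * L) * mpow (B + t • 1) (-(1/2))) α)).re := by
  have HS := fun (t : ℝ) (ht : 0 ≤ t) => aux_S hB hb0 hb ht
  set S : ℝ → Matrix (Fin n) (Fin n) ℂ := fun t => mpow (B + t • 1) (-(1/2)) with hSdef
  have HS : ∀ t, 0 ≤ t → (S t)ᴴ = S t ∧ S t * B * S t = 1 - t • (S t * S t) ∧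
      (B + t • 1) * (S t * S t) = 1 ∧ (S t * S t) * (B + t • 1) = 1 ∧
      ‖S t * S t‖ ≤ (b + t)⁻¹ ∧ ‖S t‖ * ‖S t‖ ≤ (b + t)⁻¹ := HS
  change ∫ t in Set.Ioi (0:ℝ), (trace (S t * B * S t * mpow (S t * (Lᴴ * L) * S t) α)).re =
    ((α - 1) / α) * ∫ t in Set.Ioi (0:ℝ), (trace (mpow (S t * (Lᴴ * L) * S t) α)).re
  have hM : ∀ t, 0 ≤ t → S t * (Lᴴ * L) * S t = (L * S t)ᴴ * (L * S t) := by
    intro t ht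
    rw [conjTranspose_mul, (HS t ht).1]
    simp only [mul_assoc]
  have hN : ∀ t, 0 ≤ t → L * (S t * S t) * Lᴴ = (L * S t) * (L * S t)ᴴ := by
    intro t ht
    rw [conjTranspose_mul, (HS t ht).1]
    simp only [mul_assoc]
  have hMp : ∀ t, 0 ≤ t → (S t * (Lᴴ * L) * S t).PosSemidef := fun t ht => by
    rw [hM t ht]; exact posSemidef_conjTranspose_mul_self _
  have hsplit : ∀ t, 0 ≤ t → (trace (S t * B * S t * mpow (S t * (Lᴴ * L) * S t) α)).re =
      (trace (mpow (S t * (Lᴴ * L) * S t) α)).re -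
        t * (trace (S t * S t * mpow (S t * (Lᴴ * L) * S t) α)).re := by
    intro t ht
    rw [(HS t ht).2.1, sub_mul, one_mul, trace_sub, smul_mul_assoc, trace_smul, Complex.sub_re,
      Complex.smul_re, smul_eq_mul]
  rw [setIntegral_congr_fun measurableSet_Ioi (fun t ht => hsplit t (le_of_lt ht))]
  refine aux_integral (fun t => (trace (mpow (S t * (Lᴴ * L) * S t) α)).re)
    (fun t => (trace (S t * S t * mpow (S t * (Lᴴ * L) * S t) α)).re) α b
    (n * (‖Lᴴ * L‖ * ‖(1 : Matrix (Fin n) (Fin n) ℂ)‖) ^ α) hα hb0 ?_ ?_ ?_ ?_ ?_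
  · intro t ht
    exact (Complex.nonneg_iff.1 (aux_mpow_posSemidef (hMp t ht) α).trace_nonneg).1
  · intro t ht
    refine aux_trace_mul_nonneg ?_ (aux_mpow_posSemidef (hMp t ht.le) α)
    have := posSemidef_conjTranspose_mul_self (S t)
    rwa [(HS t ht.le).1] at this
  · intro t ht
    rw [← hsplit t ht.le]
    refine aux_trace_mul_nonneg ?_ (aux_mpow_posSemidef (hMp t ht.le) α)
    have := hB.posSemidef.conjTranspose_mul_mul_same (S t)
    rwa [(HS t ht.le).1] at this
  · intro t ht
    refine (aux_trace_mpow_le (hMp t ht) α hα).trans ?_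
    rw [mul_assoc (n : ℝ)]
    refine mul_le_mul_of_nonneg_left ?_ (Nat.cast_nonneg (α := ℝ) n)
    have hbt : 0 ≤ t + b := by linarith
    rw [Real.rpow_neg hbt, ← Real.inv_rpow hbt, ← Real.mul_rpow (by positivity) (by positivity)]
    refine Real.rpow_le_rpow (by positivity) ?_ (by linarith)
    have h1 : ‖S t * (Lᴴ * L) * S t‖ ≤ ‖Lᴴ * L‖ * (t + b)⁻¹ := by
      calc ‖S t * (Lᴴ * L) * S t‖ ≤ ‖S t‖ * ‖Lᴴ * L‖ * ‖S t‖ :=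
            (norm_mul_le _ _).trans (mul_le_mul_of_nonneg_right (norm_mul_le _ _) (norm_nonneg _))
        _ = ‖Lᴴ * L‖ * (‖S t‖ * ‖S t‖) := by ring
        _ ≤ _ := by
          rw [add_comm t b]
          exact mul_le_mul_of_nonneg_left (HS t ht).2.2.2.2.2 (norm_nonneg _)
    calc _ ≤ ‖Lᴴ * L‖ * (t + b)⁻¹ * ‖(1 : Matrix (Fin n) (Fin n) ℂ)‖ :=
          mul_le_mul_of_nonneg_right h1 (norm_nonneg _)
      _ = _ := by ring
  · intro t ht
    have hder := aux_hasDerivAt L (fun s => S s * S s) b hb0 (fun s hs => ?_) (fun s hs => ?_)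
      (fun s u hs hu => ?_) α hα ht
    · have e : (trace (cfc (fun x : ℝ => α * x ^ (α - 1)) (L * (S t * S t) * Lᴴ) *
          (L * ((S t * S t) * (S t * S t)) * Lᴴ))).re =
          α * (trace (S t * S t * mpow (S t * (Lᴴ * L) * S t) α)).re := by
        have e1 : L * ((S t * S t) * (S t * S t)) * Lᴴ =
            (L * S t) * (S t * S t) * (L * S t)ᴴ := by
          rw [conjTranspose_mul, (HS t ht.le).1]
          simp only [mul_assoc]
        rw [hN t ht.le, e1, aux_trace_deriv _ _ α hα, hM t ht.le, Complex.re_ofReal_mul]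
      rw [e] at hder
      refine hder.congr_of_eventuallyEq ?_
      filter_upwards [lt_mem_nhds ht] with s hs
      rw [hN s hs.le, aux_trace_mpow_comm _ α hα, hM s hs.le]
    · refine (HS s hs.le).2.2.2.2.1.trans (inv_anti₀ hb0 (by linarith))
    · rw [hN s hs.le]
      exact posSemidef_self_mul_conjTranspose _
    · have h1 := (HS s hs.le).2.2.2.1
      have h2 := (HS u hu.le).2.2.1
      generalize S s * S s = P at *
      generalize S u * S u = Q at *
      calc P - Q = P * ((B + u • 1) * Q) - (P * (B + s • 1)) * Q := by rw [h1, h2, mul_one, one_mul]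
        _ = _ := by
          simp only [mul_add, add_mul, mul_smul_comm, smul_mul_assoc, mul_one, one_mul, mul_assoc,
            neg_smul, sub_smul]
          abel

end helpers

/-- for `A ⪰ 0`, `B ≻ 0` and `α > 1`, writing
`S t = (B + t·1)^{-1/2}` and interpreting `Tr[(A(B+t·1)⁻¹)^α] = Tr[(S t · A · S t)^α]`
and `Tr[B(B+t·1)⁻¹(A(B+t·1)⁻¹)^α] = Tr[S t · B · S t · (S t · A · S t)^α]`, we have
`∫₀^∞ Tr[B(B+t)⁻¹(A(B+t)⁻¹)^α] dt = ((α-1)/α) ∫₀^∞ Tr[(A(B+t)⁻¹)^α] dt`. -/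
theorem integral_trace_weighted_pow {n : ℕ} (A B : Matrix (Fin n) (Fin n) ℂ)
    (hA : A.PosSemidef) (hB : B.PosDef) (α : ℝ) (hα : 1 < α) :
    ∫ t in Set.Ioi (0:ℝ),
        (Matrix.trace (mpow (B + t • 1) (-(1/2)) * B * mpow (B + t • 1) (-(1/2)) *
          mpow (mpow (B + t • 1) (-(1/2)) * A * mpow (B + t • 1) (-(1/2))) α)).re
      = ((α - 1) / α) *
        ∫ t in Set.Ioi (0:ℝ),
          (Matrix.trace
            (mpow (mpow (B + t • 1) (-(1/2)) * A * mpow (B + t • 1) (-(1/2))) α)).re := by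
  obtain ⟨L, rfl⟩ := aux_factor hA
  obtain ⟨b, hb0, hb⟩ := aux_exists_lower hB
  exact aux_main L B hA hB b hb0 hb α hα
end
end

section
/- Let ρ, σ be density matrices with the support of ρ contained in the support of σ, and α > 1. Then the Hellinger divergence H_α(ρ‖σ) defined by (α-1)H_α(ρ‖σ) + 1 = α ∫₀^∞ γ^{α-1} Tr[σ {ρ > γσ}] dγ satisfies H_α(ρ‖σ) = -1/(α-1) + ∫₀^∞ Tr[((σ + t·1)^{-1/2} ρ (σ + t·1)^{-1/2})^α] dt. -/
open MeasureTheory Matrix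
open scoped ComplexOrder
noncomputable section

open Filter Topology

lemma trace_cfc_aux {n : ℕ} {A : Matrix (Fin n) (Fin n) ℂ} (hA : A.IsHermitian) (f : ℝ → ℝ) :
    (trace (cfc f A)).re = ∑ i, f (hA.eigenvalues i) := by
  rw [hA.cfc_eq, Matrix.IsHermitian.cfc, Unitary.conjStarAlgAut_apply, trace_mul_cycle,
    Unitary.coe_star_mul_self, one_mul, trace_diagonal]
  simp

lemma diag_count_aux {n : ℕ} (d e : Fin n → ℝ) (W : Matrix (Fin n) (Fin n) ℂ)
    (h : diagonal (fun i => (d i : ℂ)) = Wᴴ * diagonal (fun i => (e i : ℂ)) * W) :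
    Fintype.card {i // 0 < d i} ≤ Fintype.card {i // 0 < e i} := by
  classical
  let ext : ({i // 0 < d i} → ℂ) →ₗ[ℂ] (Fin n → ℂ) :=
    { toFun := fun c i => if hi : 0 < d i then c ⟨i, hi⟩ else 0
      map_add' := by intro x y; ext i; by_cases hi : 0 < d i <;> simp [hi]
      map_smul' := by intro x y; ext i; by_cases hi : 0 < d i <;> simp [hi] }
  let φ : ({i // 0 < d i} → ℂ) →ₗ[ℂ] ({i // 0 < e i} → ℂ) :=
    (LinearMap.funLeft ℂ ℂ (Subtype.val)) ∘ₗ (Matrix.mulVecLin W) ∘ₗ ext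
  have hφ : Function.Injective φ := by
    rw [injective_iff_map_eq_zero]
    intro c hc
    have h1 : ∀ j, 0 < e j → (W *ᵥ ext c) j = 0 := fun j hj => congrFun hc ⟨j, hj⟩
    have h2 : star (ext c) ⬝ᵥ (diagonal (fun i => (d i : ℂ)) *ᵥ ext c)
        = star (W *ᵥ ext c) ⬝ᵥ (diagonal (fun i => (e i : ℂ)) *ᵥ (W *ᵥ ext c)) := by
      rw [h, star_mulVec, ← dotProduct_mulVec, mulVec_mulVec, mulVec_mulVec, mul_assoc]
    have key : ∀ (f : Fin n → ℝ) (v : Fin n → ℂ),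
        star v ⬝ᵥ (diagonal (fun i => (f i : ℂ)) *ᵥ v)
          = ((∑ i, f i * Complex.normSq (v i) : ℝ) : ℂ) := by
      intro f v
      simp only [dotProduct, mulVec_diagonal, Pi.star_apply, RCLike.star_def]
      push_cast
      refine Finset.sum_congr rfl fun i _ => ?_
      rw [Complex.normSq_eq_conj_mul_self]; ring
    rw [key, key] at h2
    have h3 := Complex.ofReal_injective h2
    have h4 : ∑ i, e i * Complex.normSq ((W *ᵥ ext c) i) ≤ 0 := by
      refine Finset.sum_nonpos fun i _ => ?_
      by_cases hi : 0 < e i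
      · simp [h1 i hi]
      · exact mul_nonpos_of_nonpos_of_nonneg (not_lt.mp hi) (Complex.normSq_nonneg _)
    have h5 : ∀ i ∈ Finset.univ, 0 ≤ d i * Complex.normSq (ext c i) := by
      intro i _
      by_cases hi : 0 < d i
      · exact mul_nonneg hi.le (Complex.normSq_nonneg _)
      · simp [ext, hi]
    have h6 := (Finset.sum_eq_zero_iff_of_nonneg h5).mp
      (le_antisymm (h3 ▸ h4) (Finset.sum_nonneg h5))
    ext ⟨i, hi⟩
    have := h6 i (Finset.mem_univ _)
    simpa [hi.ne', ext, hi] using this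
  have := LinearMap.finrank_le_finrank_of_injective hφ
  simpa using this

/-- number of eigenvalues above `a` -/
def cntE {n : ℕ} (A : Matrix (Fin n) (Fin n) ℂ) (a : ℝ) : ℝ :=
  (trace (cfc (fun x : ℝ => if a < x then (1:ℝ) else 0) A)).re

lemma cntE_eq {n : ℕ} {A : Matrix (Fin n) (Fin n) ℂ} (hA : A.IsHermitian) (a : ℝ) :
    cntE A a = ∑ i, if a < hA.eigenvalues i then (1:ℝ) else 0 := trace_cfc_aux hA _

lemma cntE_le {n : ℕ} {A B : Matrix (Fin n) (Fin n) ℂ} (hA : A.IsHermitian) (hB : B.IsHermitian)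
    (a b : ℝ) (T : Matrix (Fin n) (Fin n) ℂ)
    (h : A - a • 1 = Tᴴ * (B - b • 1) * T) : cntE A a ≤ cntE B b := by
  rw [cntE_eq hA, cntE_eq hB]
  have hd : ∀ {C : Matrix (Fin n) (Fin n) ℂ} (hC : C.IsHermitian) (c : ℝ),
      diagonal (fun i => ((hC.eigenvalues i - c : ℝ) : ℂ))
        = (hC.eigenvectorUnitary : Matrix (Fin n) (Fin n) ℂ)ᴴ * (C - c • 1) *
          hC.eigenvectorUnitary ∧ (C - c • 1) =
          (hC.eigenvectorUnitary : Matrix (Fin n) (Fin n) ℂ) *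
          diagonal (fun i => ((hC.eigenvalues i - c : ℝ) : ℂ))
          * (hC.eigenvectorUnitary : Matrix (Fin n) (Fin n) ℂ)ᴴ := by
    intro C hC c
    have h1 := hC.spectral_theorem
    rw [Unitary.conjStarAlgAut_apply] at h1
    have hu : (hC.eigenvectorUnitary : Matrix (Fin n) (Fin n) ℂ)ᴴ * hC.eigenvectorUnitary = 1 :=
      Unitary.coe_star_mul_self _
    have hu' : (hC.eigenvectorUnitary : Matrix (Fin n) (Fin n) ℂ)
        * (hC.eigenvectorUnitary : Matrix (Fin n) (Fin n) ℂ)ᴴ = 1 :=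
      Unitary.coe_mul_star_self _
    set U := (hC.eigenvectorUnitary : Matrix (Fin n) (Fin n) ℂ) with hU
    have h2 : diagonal (fun i => ((hC.eigenvalues i - c : ℝ) : ℂ))
      = diagonal (RCLike.ofReal ∘ hC.eigenvalues) - c • (1 : Matrix (Fin n) (Fin n) ℂ) := by
      ext i j
      by_cases hij : i = j <;> simp [diagonal, hij]
    have h3 : (C - c • 1) = U * diagonal (fun i => ((hC.eigenvalues i - c : ℝ) : ℂ)) * Uᴴ := by
      rw [h2]
      simp only [mul_sub, sub_mul, mul_smul_comm, smul_mul_assoc, mul_one, hu']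
      congr 1
    refine ⟨?_, h3⟩
    rw [h3]
    simp only [← mul_assoc, hu, one_mul]
    rw [mul_assoc, hu, mul_one]
  have := diag_count_aux (fun i => hA.eigenvalues i - a) (fun i => hB.eigenvalues i - b)
    ((hB.eigenvectorUnitary : Matrix (Fin n) (Fin n) ℂ)ᴴ * T * hA.eigenvectorUnitary) (by
      rw [(hd hA a).1, h, (hd hB b).2]
      simp only [conjTranspose_mul, conjTranspose_conjTranspose, mul_assoc])
  simp only [sub_pos, Fintype.card_subtype] at this
  simp only [Finset.sum_boole]
  exact_mod_cast this

lemma layer_aux {α : ℝ} (hα : 1 < α) {x : ℝ} (hx : 0 ≤ x) :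
    ∫⁻ γ in Set.Ioi (0:ℝ), ENNReal.ofReal (α * γ ^ (α - 1)) *
      ENNReal.ofReal (if γ < x then (1:ℝ) else 0) = ENNReal.ofReal (x ^ α) := by
  have h1 : ∀ γ : ℝ, ENNReal.ofReal (α * γ ^ (α - 1)) *
      ENNReal.ofReal (if γ < x then (1:ℝ) else 0) =
      (Set.Iio x).indicator (fun γ => ENNReal.ofReal (α * γ ^ (α - 1))) γ := by
    intro γ
    by_cases h : γ < x <;> simp [h]
  simp_rw [h1]
  rw [lintegral_indicator measurableSet_Iio, Measure.restrict_restrict measurableSet_Iio,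
    Set.inter_comm, Set.Ioi_inter_Iio, Measure.restrict_congr_set Ioo_ae_eq_Ioc]
  rw [← ofReal_integral_eq_lintegral_ofReal]
  · rw [← intervalIntegral.integral_of_le hx, intervalIntegral.integral_const_mul,
      integral_rpow (Or.inl (by linarith))]
    congr 1
    rw [sub_add_cancel, Real.zero_rpow (by linarith)]
    field_simp
    ring
  · have := (intervalIntegral.intervalIntegrable_rpow' (a := 0) (b := x) (r := α - 1)
      (by linarith)).const_mul α
    rwa [intervalIntegrable_iff_integrableOn_Ioc_of_le hx] at this
  · filter_upwards [ae_restrict_mem measurableSet_Ioc] with γ hγ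
    have := hγ.1
    positivity

lemma tint_aux {γ : ℝ} (hγ : 0 < γ) (l : ℝ) :
    ∫⁻ t in Set.Ioi (0:ℝ), ENNReal.ofReal (if γ * t < l then (1:ℝ) else 0)
      = ENNReal.ofReal (max l 0 / γ) := by
  have h1 : ∀ t : ℝ, ENNReal.ofReal (if γ * t < l then (1:ℝ) else 0) =
      (Set.Iio (l / γ)).indicator (fun _ => 1) t := by
    intro t
    have : γ * t < l ↔ t < l / γ := by rw [lt_div_iff₀ hγ, mul_comm]
    by_cases h : t < l / γ <;> simp [h, this]
  simp_rw [h1]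
  rw [lintegral_indicator measurableSet_Iio, Measure.restrict_restrict measurableSet_Iio,
    Set.inter_comm, Set.Ioi_inter_Iio]
  simp only [lintegral_const, MeasurableSet.univ, Measure.restrict_apply, Set.univ_inter,
    Real.volume_Ioo, sub_zero, one_mul]
  rcases le_total l 0 with h | h
  · rw [max_eq_right h, zero_div, ENNReal.ofReal_zero, ENNReal.ofReal_of_nonpos]
    exact div_nonpos_of_nonpos_of_nonneg h hγ.le
  · rw [max_eq_left h]

open scoped Matrix.Norms.L2Operator in
lemma continuous_trace_cfc_aux {n : ℕ} {X : Type*} [TopologicalSpace X] (f : ℝ → ℝ)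
    (hf : Continuous f) (a : X → Matrix (Fin n) (Fin n) ℂ) (ha : Continuous a)
    (ha' : ∀ x, (a x).IsHermitian) : Continuous fun x => (trace (cfc f (a x))).re := by
  have : Continuous fun x => cfc f (a x) := by
    refine Continuous.cfc_of_mem_nhdsSet (s := Set.univ) f univ_mem ha (fun x => ha' x)
      hf.continuousOn
  exact Complex.continuous_re.comp (this.matrix_trace)

lemma measurable_cntE_aux {n : ℕ} {X : Type*} [TopologicalSpace X] [MeasurableSpace X]
    [BorelSpace X] (a : X → Matrix (Fin n) (Fin n) ℂ) (ha : Continuous a)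
    (ha' : ∀ x, (a x).IsHermitian) : Measurable fun x => cntE (a x) 0 := by
  refine measurable_of_tendsto_metrizable (f := fun (m : ℕ) x =>
    (trace (cfc (fun y : ℝ => min 1 (m * max y 0)) (a x))).re) (fun m => ?_) ?_
  · exact (continuous_trace_cfc_aux _ (by fun_prop) a ha ha').measurable
  · rw [tendsto_pi_nhds]
    intro x
    simp_rw [cntE_eq (ha' x), trace_cfc_aux (ha' x)]
    refine tendsto_finsetSum _ fun i _ => ?_
    generalize (ha' x).eigenvalues i = l
    by_cases h : 0 < l
    · refine tendsto_const_nhds.congr' ?_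
      obtain ⟨N, hN⟩ := exists_nat_gt (1 / l)
      filter_upwards [eventually_ge_atTop N] with m hm
      have : (N : ℝ) ≤ m := by exact_mod_cast hm
      rw [max_eq_left h.le, if_pos h, min_eq_left]
      rw [div_lt_iff₀ h] at hN
      nlinarith
    · simp [h, max_eq_right (not_lt.mp h)]

lemma cont_spec_aux {n : ℕ} (A : Matrix (Fin n) (Fin n) ℂ) (f : ℝ → ℝ) :
    ContinuousOn f (spectrum ℝ A) := (Matrix.finite_real_spectrum).continuousOn f

lemma cfc_mul_aux {n : ℕ} (A : Matrix (Fin n) (Fin n) ℂ) (f g : ℝ → ℝ) :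
    cfc (fun x => f x * g x) A = cfc f A * cfc g A :=
  cfc_mul f g A (cont_spec_aux A f) (cont_spec_aux A g)

open scoped MatrixOrder in
lemma cfc_psd_aux {n : ℕ} {A : Matrix (Fin n) (Fin n) ℂ} (f : ℝ → ℝ)
    (hf : ∀ x ∈ spectrum ℝ A, 0 ≤ f x) :
    (cfc f A).PosSemidef := by
  rw [← Matrix.nonneg_iff_posSemidef]
  exact cfc_nonneg hf

lemma spec_nonneg_aux {n : ℕ} {A : Matrix (Fin n) (Fin n) ℂ} (hA : A.PosSemidef) :
    ∀ x ∈ spectrum ℝ A, 0 ≤ x := by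
  intro x hx
  rw [hA.1.spectrum_real_eq_range_eigenvalues] at hx
  obtain ⟨i, rfl⟩ := hx
  exact hA.eigenvalues_nonneg i

lemma spec_pos_aux {n : ℕ} {A : Matrix (Fin n) (Fin n) ℂ} (hA : A.PosDef) :
    ∀ x ∈ spectrum ℝ A, 0 < x := by
  intro x hx
  rw [hA.1.spectrum_real_eq_range_eigenvalues] at hx
  obtain ⟨i, rfl⟩ := hx
  exact hA.eigenvalues_pos i

lemma trace_mul_nonneg_aux {n : ℕ} {A B : Matrix (Fin n) (Fin n) ℂ} (hA : A.PosSemidef)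
    (hB : B.PosSemidef) : 0 ≤ (trace (A * B)).re := by
  have hS : (cfc Real.sqrt A).PosSemidef := cfc_psd_aux _ fun x _ => Real.sqrt_nonneg x
  have hSS : cfc Real.sqrt A * cfc Real.sqrt A = A := by
    rw [← cfc_mul_aux]
    conv_rhs => rw [← cfc_id ℝ A hA.1.isSelfAdjoint]
    exact cfc_congr fun x hx => Real.mul_self_sqrt (spec_nonneg_aux hA x hx)
  have h := (hB.mul_mul_conjTranspose_same (cfc Real.sqrt A)).trace_nonneg
  rw [hS.1.eq, trace_mul_cycle, hSS] at h
  exact (Complex.le_def.mp h).1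

lemma projPos_psd {n : ℕ} (A : Matrix (Fin n) (Fin n) ℂ) : (projPos A).PosSemidef :=
  cfc_psd_aux _ fun x _ => by split_ifs <;> norm_num

lemma one_sub_projPos_psd {n : ℕ} {A : Matrix (Fin n) (Fin n) ℂ} (hA : A.IsHermitian) :
    (1 - projPos A).PosSemidef := by
  have : 1 - projPos A = cfc (fun x : ℝ => 1 - if 0 < x then (1:ℝ) else 0) A := by
    rw [cfc_sub _ _ A (cont_spec_aux _ _) (cont_spec_aux _ _), cfc_const_one ℝ A hA.isSelfAdjoint]
    rfl
  rw [this]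
  exact cfc_psd_aux _ fun x _ => by split_ifs <;> norm_num

lemma trace_proj_le_aux {n : ℕ} {A B : Matrix (Fin n) (Fin n) ℂ} (hA : A.IsHermitian)
    (hB : B.IsHermitian) : (trace (A * projPos B)).re ≤ (trace (mposPart A)).re := by
  have h1 : A = mposPart A - cfc (fun x : ℝ => max (-x) 0) A := by
    rw [mposPart, ← cfc_sub _ _ A (cont_spec_aux _ _) (cont_spec_aux _ _)]
    conv_lhs => rw [← cfc_id ℝ A hA.isSelfAdjoint]
    exact cfc_congr fun x hx => by
      rcases le_total x 0 with h | h
      · simp [h]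
      · simp [h]
  have h2 : 0 ≤ (trace (mposPart A * (1 - projPos B))).re :=
    trace_mul_nonneg_aux (cfc_psd_aux _ fun x _ => le_max_right _ _) (one_sub_projPos_psd hB)
  have h3 : 0 ≤ (trace (cfc (fun x : ℝ => max (-x) 0) A * projPos B)).re :=
    trace_mul_nonneg_aux (cfc_psd_aux _ fun x _ => le_max_right _ _) (projPos_psd B)
  conv_lhs => rw [h1]
  rw [mul_sub, mul_one, trace_sub, Complex.sub_re] at h2
  rw [sub_mul, trace_sub, Complex.sub_re]
  linarith

lemma trace_proj_self_aux {n : ℕ} {A : Matrix (Fin n) (Fin n) ℂ} (hA : A.IsHermitian) :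
    A * projPos A = mposPart A := by
  conv_lhs => rw [← cfc_id ℝ A hA.isSelfAdjoint, cfc_id ℝ A hA.isSelfAdjoint]
  have : cfc (fun x : ℝ => x) A * projPos A = mposPart A := by
    rw [projPos, ← cfc_mul_aux, mposPart]
    refine cfc_congr fun x hx => ?_
    by_cases h : 0 < x
    · simp [h, h.le]
    · simp [h, not_lt.mp h]
  rwa [cfc_id' ℝ A hA.isSelfAdjoint] at this

lemma supp_aux {n : ℕ} {ρ σ : Matrix (Fin n) (Fin n) ℂ}
    (hρ : ρ.PosSemidef) (hσ : σ.PosSemidef)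
    (hsupp : ∀ x : Fin n → ℂ, σ *ᵥ x = 0 → ρ *ᵥ x = 0) :
    ∃ C : ℝ, 0 < C ∧ ∀ γ : ℝ, C ≤ γ → (-(ρ - γ • σ)).PosSemidef := by
  have hP : (projPos σ).IsHermitian := (projPos_psd σ).1
  have h1 : σ * (1 - projPos σ) = 0 := by
    have h2 : mposPart σ = σ := by
      conv_rhs => rw [← cfc_id ℝ σ hσ.1.isSelfAdjoint]
      exact cfc_congr fun x hx => max_eq_left (spec_nonneg_aux hσ x hx)
    rw [mul_sub, mul_one, trace_proj_self_aux hσ.1, h2, sub_self]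
  have h3 : ρ * (1 - projPos σ) = 0 := by
    ext i j
    have h4 : σ *ᵥ (1 - projPos σ).col j = 0 := by
      ext i
      exact congrFun (congrFun h1 i) j
    exact congrFun (hsupp _ h4) i
  have h4 : ρ * projPos σ = ρ := by
    rw [mul_sub, mul_one, sub_eq_zero] at h3; exact h3.symm
  have h5 : projPos σ * ρ * (projPos σ)ᴴ = ρ := by
    have := congrArg conjTranspose h4
    rw [conjTranspose_mul, hρ.1.eq, hP.eq] at this
    rw [this, hP.eq, h4]
  have h6 : projPos σ * (projPos σ)ᴴ = projPos σ := by
    rw [hP.eq, projPos, ← cfc_mul_aux]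
    exact cfc_congr fun x hx => by simp
  obtain ⟨M, hM0, hM⟩ : ∃ M : ℝ, 0 ≤ M ∧ (M • 1 - ρ).PosSemidef := by
    refine ⟨∑ i, hρ.1.eigenvalues i, Finset.sum_nonneg fun i _ => hρ.eigenvalues_nonneg i, ?_⟩
    have : (∑ i, hρ.1.eigenvalues i) • 1 - ρ
        = cfc (fun x : ℝ => (∑ i, hρ.1.eigenvalues i) - x) ρ := by
      rw [cfc_sub _ _ ρ (cont_spec_aux _ _) (cont_spec_aux _ _), cfc_id' ℝ ρ hρ.1.isSelfAdjoint,
        cfc_const _ ρ hρ.1.isSelfAdjoint, Algebra.algebraMap_eq_smul_one]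
    rw [this]
    refine cfc_psd_aux _ fun x hx => ?_
    rw [hρ.1.spectrum_real_eq_range_eigenvalues] at hx
    obtain ⟨i, rfl⟩ := hx
    exact sub_nonneg.mpr (Finset.single_le_sum (fun i _ => hρ.eigenvalues_nonneg i) (Finset.mem_univ i))
  obtain ⟨c, hc0, hc⟩ : ∃ c : ℝ, 0 ≤ c ∧ (c • σ - projPos σ).PosSemidef := by
    have h0 : ∀ i, 0 ≤ (hσ.1.eigenvalues i)⁻¹ := fun i => inv_nonneg.mpr (hσ.eigenvalues_nonneg i)
    refine ⟨∑ i, (hσ.1.eigenvalues i)⁻¹, Finset.sum_nonneg fun i _ => h0 i, ?_⟩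
    have : (∑ i, (hσ.1.eigenvalues i)⁻¹) • σ - projPos σ
        = cfc (fun x : ℝ => (∑ i, (hσ.1.eigenvalues i)⁻¹) • x - if 0 < x then (1:ℝ) else 0) σ := by
      rw [cfc_sub _ _ σ (cont_spec_aux _ _) (cont_spec_aux _ _),
        cfc_smul _ _ _ (cont_spec_aux _ _), cfc_id' ℝ σ hσ.1.isSelfAdjoint, projPos]
    rw [this]
    refine cfc_psd_aux _ fun x hx => ?_
    rw [hσ.1.spectrum_real_eq_range_eigenvalues] at hx
    obtain ⟨i, rfl⟩ := hx
    have h7 := Finset.single_le_sum (f := fun i => (hσ.1.eigenvalues i)⁻¹)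
      (fun i _ => h0 i) (Finset.mem_univ i)
    have h8 := hσ.eigenvalues_nonneg i
    split_ifs with h
    · have := mul_le_mul_of_nonneg_right h7 h.le
      simp only [inv_mul_cancel₀ h.ne'] at this
      simpa using this
    · simp only [smul_eq_mul, sub_zero]
      exact mul_nonneg (Finset.sum_nonneg fun i _ => h0 i) h8
  refine ⟨M * c + 1, by positivity, fun γ hγ => ?_⟩
  have h7 := hM.mul_mul_conjTranspose_same (projPos σ)
  have h8 : projPos σ * (M • 1 - ρ) * (projPos σ)ᴴ = M • projPos σ - ρ := by
    rw [mul_sub, sub_mul, h5]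
    simp [h6]
  rw [h8] at h7
  have h9 : -(ρ - γ • σ) = (M • projPos σ - ρ) + M • (c • σ - projPos σ) + (γ - M * c) • σ := by
    module
  rw [h9]
  refine (h7.add (hc.smul hM0)).add (hσ.smul ?_)
  linarith

lemma ibp_aux {f g : ℝ → ℝ} (h : ∀ a b, f a - (b - a) * g a ≤ f b) (hg0 : ∀ a, 0 ≤ g a)
    (hg1 : ∀ a, g a ≤ 1) {C : ℝ} (hC : 0 < C) (hfC : ∀ a, C ≤ a → f a = 0)
    (hgC : ∀ a, C ≤ a → g a = 0) {α : ℝ} (hα : 1 < α) :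
    (α - 1) * ∫ γ in Set.Ioi (0:ℝ), γ ^ (α - 2) * f γ = ∫ γ in Set.Ioi (0:ℝ), γ ^ (α - 1) * g γ := by
  have hanti : Antitone g := by
    intro a b hab
    rcases hab.eq_or_lt with rfl | hab
    · exact le_rfl
    · have h1 := h a b
      have h2 := h b a
      by_contra hc
      push Not at hc
      nlinarith [mul_pos (sub_pos.mpr hab) (sub_pos.mpr hc)]
  have hbd : ∀ x y, |f y - f x + (y - x) * g x| ≤ |y - x| * |g y - g x| := by
    intro x y
    have h1 := h x y
    have h2 := h y x
    rw [← abs_mul, abs_of_nonneg (by linarith)]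
    refine le_trans ?_ (neg_le_abs _)
    linarith
  have hder : ∀ x, ContinuousAt g x → HasDerivAt f (-g x) x := by
    intro x hx
    rw [hasDerivAt_iff_isLittleO, Asymptotics.isLittleO_iff]
    intro ε hε
    have : ∀ᶠ y in 𝓝 x, |g y - g x| < ε := by
      have := Metric.continuousAt_iff'.mp hx ε hε
      simpa [Real.dist_eq] using this
    filter_upwards [this] with y hy
    have h1 := hbd x y
    simp only [smul_eq_mul, Real.norm_eq_abs]
    rw [show f y - f x - (y - x) * -g x = f y - f x + (y - x) * g x by ring]
    nlinarith [abs_nonneg (y - x)]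
  have hcont : Continuous f := by
    refine (LipschitzWith.of_dist_le_mul (K := 1) fun x y => ?_).continuous
    simp only [Real.dist_eq, NNReal.coe_one, one_mul]
    have h1 := h x y
    have h2 := h y x
    have := hg0 x
    have := hg0 y
    have := hg1 x
    have := hg1 y
    rcases le_total x y with hxy | hxy
    · rw [abs_of_nonpos (sub_nonpos.mpr hxy), abs_le]
      constructor <;> nlinarith
    · rw [abs_of_nonneg (sub_nonneg.mpr hxy), abs_le]
      constructor <;> nlinarith
  have hi1 : IntervalIntegrable (fun γ : ℝ => γ ^ (α - 2) * f γ) volume 0 C :=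
    (intervalIntegral.intervalIntegrable_rpow' (by linarith)).mul_continuousOn hcont.continuousOn
  have hi2 : IntervalIntegrable (fun γ : ℝ => γ ^ (α - 1) * g γ) volume 0 C :=
    (hanti.intervalIntegrable).continuousOn_mul
      (Real.continuous_rpow_const (by linarith)).continuousOn
  have hF := integral_eq_of_hasDerivAt_off_countable_of_le (fun γ : ℝ => γ ^ (α - 1) * f γ)
    (fun γ => (α - 1) * (γ ^ (α - 2) * f γ) - γ ^ (α - 1) * g γ) hC.le
    hanti.countable_not_continuousAt
    ((Real.continuous_rpow_const (by linarith)).mul hcont).continuousOn (by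
      rintro x ⟨⟨hx0, hxC⟩, hx⟩
      have hx' : ContinuousAt g x := by simpa using hx
      have h1 := (Real.hasDerivAt_rpow_const (x := x) (p := α - 1) (Or.inl hx0.ne')).mul (hder x hx')
      refine h1.congr_deriv ?_
      rw [show α - 1 - 1 = α - 2 by ring]
      ring) ((hi1.const_mul _).sub hi2)
  rw [intervalIntegral.integral_sub (hi1.const_mul _) hi2, intervalIntegral.integral_const_mul] at hF
  simp only [hfC C le_rfl, mul_zero, Real.zero_rpow (show α - 1 ≠ 0 by linarith), zero_mul,
    sub_zero] at hF
  have hext : ∀ q : ℝ → ℝ, (∀ a, C ≤ a → q a = 0) →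
      ∫ γ in Set.Ioi (0:ℝ), q γ = ∫ γ in (0:ℝ)..C, q γ := by
    intro q hq
    rw [intervalIntegral.integral_of_le hC.le]
    refine setIntegral_eq_of_subset_of_forall_sdiff_eq_zero measurableSet_Ioi
      Set.Ioc_subset_Ioi_self ?_
    rintro x ⟨hx, hx'⟩
    apply hq
    by_contra hc
    exact hx' ⟨hx, (not_le.mp hc).le⟩
  rw [hext _ fun a ha => by rw [hfC a ha, mul_zero], hext _ fun a ha => by rw [hgC a ha, mul_zero]]
  linarith

lemma shift_count_aux {n : ℕ} {ρ σ : Matrix (Fin n) (Fin n) ℂ}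
    (hρ : ρ.PosSemidef) (hσ : σ.PosSemidef) {t : ℝ} (ht : 0 < t) (γ : ℝ) :
    cntE (mpow (σ + t • 1) (-(1/2)) * ρ * mpow (σ + t • 1) (-(1/2))) γ
      = cntE (ρ - γ • σ - (γ * t) • 1) 0 := by
  have hM : (σ + t • (1 : Matrix (Fin n) (Fin n) ℂ)).PosDef :=
    Matrix.PosDef.posSemidef_add hσ (Matrix.PosDef.one.smul ht)
  have hsp := spec_pos_aux hM
  set M := σ + t • (1 : Matrix (Fin n) (Fin n) ℂ) with hMdef
  have hMe : γ • σ + (γ * t) • (1 : Matrix (Fin n) (Fin n) ℂ) = γ • M := by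
    rw [hMdef]; module
  have hS : (mpow M (-(1/2))).PosSemidef :=
    cfc_psd_aux _ fun x hx => Real.rpow_nonneg (hsp x hx).le _
  have hT : (mpow M (1/2)).PosSemidef :=
    cfc_psd_aux _ fun x hx => Real.rpow_nonneg (hsp x hx).le _
  have hST : mpow M (-(1/2)) * mpow M (1/2) = 1 := by
    rw [mpow, mpow, ← cfc_mul_aux, ← cfc_const_one ℝ M hM.1.isSelfAdjoint]
    refine cfc_congr fun x hx => ?_
    rw [← Real.rpow_add (hsp x hx)]; norm_num
  have hTS : mpow M (1/2) * mpow M (-(1/2)) = 1 := by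
    rw [mpow, mpow, ← cfc_mul_aux, ← cfc_const_one ℝ M hM.1.isSelfAdjoint]
    refine cfc_congr fun x hx => ?_
    rw [← Real.rpow_add (hsp x hx)]; norm_num
  have hTT : mpow M (1/2) * mpow M (1/2) = M := by
    conv_rhs => rw [← cfc_id' ℝ M hM.1.isSelfAdjoint]
    rw [mpow, ← cfc_mul_aux]
    refine cfc_congr fun x hx => ?_
    rw [← Real.rpow_add (hsp x hx)]; norm_num
  set S := mpow M (-(1/2))
  set T := mpow M (1/2)
  have hX : (S * ρ * S).IsHermitian := by
    have := (hρ.mul_mul_conjTranspose_same S).1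
    rwa [hS.1.eq] at this
  have hA : (ρ - γ • σ - (γ * t) • (1 : Matrix (Fin n) (Fin n) ℂ)).IsHermitian := by
    have h1 : (1 : Matrix (Fin n) (Fin n) ℂ).IsHermitian := Matrix.isHermitian_one
    exact (hρ.1.sub (hσ.1.smul (IsSelfAdjoint.all γ))).sub (h1.smul (IsSelfAdjoint.all _))
  have hSMS : S * M * S = 1 := by
    rw [← hTT, ← mul_assoc, hST, one_mul, hTS]
  have hTXT : T * (S * ρ * S) * T = ρ := by
    rw [← mul_assoc, ← mul_assoc, hTS, one_mul, mul_assoc, hST, mul_one]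
  apply le_antisymm
  · refine cntE_le hX hA γ 0 S ?_
    rw [hS.1.eq, zero_smul, sub_zero, sub_sub, hMe, mul_sub, sub_mul, mul_smul_comm, smul_mul_assoc,
      hSMS]
  · refine cntE_le hA hX 0 γ T ?_
    rw [hT.1.eq, zero_smul, sub_zero, sub_sub, hMe, mul_sub, sub_mul, hTXT, mul_smul_comm,
      smul_mul_assoc, mul_one, hTT]

lemma herm_aux {n : ℕ} {ρ σ : Matrix (Fin n) (Fin n) ℂ}
    (hρ : ρ.PosSemidef) (hσ : σ.PosSemidef) (γ : ℝ) : (ρ - γ • σ).IsHermitian :=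
  hρ.1.sub (hσ.1.smul (IsSelfAdjoint.all γ))

lemma herm_aux2 {n : ℕ} {ρ σ : Matrix (Fin n) (Fin n) ℂ}
    (hρ : ρ.PosSemidef) (hσ : σ.PosSemidef) (γ s : ℝ) :
    (ρ - γ • σ - s • (1 : Matrix (Fin n) (Fin n) ℂ)).IsHermitian := by
  have h1 : (1 : Matrix (Fin n) (Fin n) ℂ).IsHermitian := Matrix.isHermitian_one
  exact (herm_aux hρ hσ γ).sub (h1.smul (IsSelfAdjoint.all _))

lemma cntE_shift {n : ℕ} {ρ σ : Matrix (Fin n) (Fin n) ℂ}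
    (hρ : ρ.PosSemidef) (hσ : σ.PosSemidef) (γ s : ℝ) :
    cntE (ρ - γ • σ - s • 1) 0 = cntE (ρ - γ • σ) s := by
  apply le_antisymm
  · exact cntE_le (herm_aux2 hρ hσ γ s) (herm_aux hρ hσ γ) _ _ 1 (by simp)
  · exact cntE_le (herm_aux hρ hσ γ) (herm_aux2 hρ hσ γ s) _ _ 1 (by simp)

lemma ofReal_sum_mul_aux {n : ℕ} (c : ENNReal) (f : Fin n → ℝ) (hf : ∀ i, 0 ≤ f i) :
    c * ENNReal.ofReal (∑ i, f i) = ∑ i, c * ENNReal.ofReal (f i) := by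
  rw [ENNReal.ofReal_sum_of_nonneg fun i _ => hf i, Finset.mul_sum]

lemma trace_mpow_aux {n : ℕ} {X : Matrix (Fin n) (Fin n) ℂ} (hX : X.PosSemidef)
    {α : ℝ} (hα : 1 < α) :
    ENNReal.ofReal (trace (mpow X α)).re = ∫⁻ γ in Set.Ioi (0:ℝ),
      ENNReal.ofReal (α * γ ^ (α - 1)) * ENNReal.ofReal (cntE X γ) := by
  rw [mpow, trace_cfc_aux hX.1,
    ENNReal.ofReal_sum_of_nonneg fun i _ => Real.rpow_nonneg (hX.eigenvalues_nonneg i) _]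
  simp_rw [cntE_eq hX.1]
  have : ∀ γ : ℝ, ENNReal.ofReal (α * γ ^ (α - 1)) *
      ENNReal.ofReal (∑ i, if γ < hX.1.eigenvalues i then (1:ℝ) else 0)
      = ∑ i, ENNReal.ofReal (α * γ ^ (α - 1)) *
        ENNReal.ofReal (if γ < hX.1.eigenvalues i then (1:ℝ) else 0) := fun γ =>
    ofReal_sum_mul_aux _ _ fun i => by split_ifs <;> norm_num
  simp_rw [this]
  rw [lintegral_finsetSum']
  · exact Finset.sum_congr rfl fun i _ => (layer_aux hα (hX.eigenvalues_nonneg i)).symm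
  · intro i _
    refine Measurable.aemeasurable ?_
    have hm : Measurable fun γ : ℝ => ENNReal.ofReal (α * γ ^ (α - 1)) := by fun_prop
    refine hm.mul ?_
    exact (Measurable.ite measurableSet_Iio measurable_const measurable_const).ennreal_ofReal

lemma tint_trace_aux {n : ℕ} {A : Matrix (Fin n) (Fin n) ℂ} (hA : A.IsHermitian)
    {γ : ℝ} (hγ : 0 < γ) :
    ∫⁻ t in Set.Ioi (0:ℝ), ENNReal.ofReal (cntE A (γ * t))
      = ENNReal.ofReal ((trace (mposPart A)).re / γ) := by
  simp_rw [cntE_eq hA]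
  rw [mposPart, trace_cfc_aux hA, Finset.sum_div, ENNReal.ofReal_sum_of_nonneg
    fun i _ => div_nonneg (le_max_right _ _) hγ.le]
  have : ∀ t : ℝ,
      ENNReal.ofReal (∑ i, if γ * t < hA.eigenvalues i then (1:ℝ) else 0)
      = ∑ i, ENNReal.ofReal (if γ * t < hA.eigenvalues i then (1:ℝ) else 0) := fun t =>
    ENNReal.ofReal_sum_of_nonneg fun i _ => by split_ifs <;> norm_num
  simp_rw [this]
  rw [lintegral_finsetSum']
  · exact Finset.sum_congr rfl fun i _ => tint_aux hγ _
  · intro i _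
    refine Measurable.aemeasurable ?_
    exact (Measurable.ite (measurableSet_lt (by fun_prop) measurable_const)
      measurable_const measurable_const).ennreal_ofReal

lemma tonelli_aux {n : ℕ} {ρ σ : Matrix (Fin n) (Fin n) ℂ}
    (hρ : ρ.PosSemidef) (hσ : σ.PosSemidef) {α : ℝ} (hα : 1 < α) :
    ∫ t in Set.Ioi (0:ℝ), (Matrix.trace
            (mpow (mpow (σ + t • 1) (-(1/2)) * ρ * mpow (σ + t • 1) (-(1/2))) α)).re
      = α * ∫ γ in Set.Ioi (0:ℝ), γ ^ (α - 2) * (trace (mposPart (ρ - γ • σ))).re := by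
  have hXp : ∀ t : ℝ, 0 < t →
      (mpow (σ + t • 1) (-(1/2)) * ρ * mpow (σ + t • 1) (-(1/2))).PosSemidef := by
    intro t ht
    have hM : (σ + t • (1 : Matrix (Fin n) (Fin n) ℂ)).PosDef :=
      Matrix.PosDef.posSemidef_add hσ (Matrix.PosDef.one.smul ht)
    have hS : (mpow (σ + t • 1) (-(1/2))).PosSemidef :=
      cfc_psd_aux _ fun x hx => Real.rpow_nonneg (spec_pos_aux hM x hx).le _
    have := hρ.mul_mul_conjTranspose_same (mpow (σ + t • 1) (-(1/2)))
    rwa [hS.1.eq] at this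
  have hXe : ∀ t : ℝ, 0 < t → ENNReal.ofReal (Matrix.trace
            (mpow (mpow (σ + t • 1) (-(1/2)) * ρ * mpow (σ + t • 1) (-(1/2))) α)).re
      = ∫⁻ γ in Set.Ioi (0:ℝ), ENNReal.ofReal (α * γ ^ (α - 1)) *
          ENNReal.ofReal (cntE (ρ - γ • σ - (γ * t) • 1) 0) := by
    intro t ht
    rw [trace_mpow_aux (hXp t ht) hα]
    simp_rw [shift_count_aux hρ hσ ht]
  have hXn : ∀ t : ℝ, 0 < t → 0 ≤ (Matrix.trace
            (mpow (mpow (σ + t • 1) (-(1/2)) * ρ * mpow (σ + t • 1) (-(1/2))) α)).re := by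
    intro t ht
    rw [mpow, trace_cfc_aux (hXp t ht).1]
    exact Finset.sum_nonneg fun i _ => Real.rpow_nonneg ((hXp t ht).eigenvalues_nonneg i) _
  have hmeas : Measurable (fun p : ℝ × ℝ => ENNReal.ofReal (α * p.2 ^ (α - 1)) *
          ENNReal.ofReal (cntE (ρ - p.2 • σ - (p.2 * p.1) • 1) 0)) := by
    refine Measurable.mul (by fun_prop) (Measurable.ennreal_ofReal ?_)
    exact measurable_cntE_aux (fun p : ℝ × ℝ => ρ - p.2 • σ - (p.2 * p.1) • 1) (by fun_prop)
      (fun p => herm_aux2 hρ hσ _ _)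
  have hmeas1 : Measurable (fun t : ℝ => ∫⁻ γ in Set.Ioi (0:ℝ), ENNReal.ofReal (α * γ ^ (α - 1)) *
          ENNReal.ofReal (cntE (ρ - γ • σ - (γ * t) • 1) 0)) := hmeas.lintegral_prod_right'
  have hfm : Continuous fun γ : ℝ => (trace (mposPart (ρ - γ • σ))).re :=
    continuous_trace_cfc_aux _ (by fun_prop) _ (by fun_prop) (fun γ => herm_aux hρ hσ γ)
  have hf0 : ∀ γ : ℝ, 0 ≤ (trace (mposPart (ρ - γ • σ))).re := by
    intro γ
    rw [mposPart, trace_cfc_aux (herm_aux hρ hσ γ)]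
    exact Finset.sum_nonneg fun i _ => le_max_right _ _
  rw [← integral_const_mul, integral_eq_lintegral_of_nonneg_ae, integral_eq_lintegral_of_nonneg_ae]
  · congr 1
    rw [setLIntegral_congr_fun measurableSet_Ioi fun t ht => hXe t ht,
      lintegral_lintegral_swap hmeas.aemeasurable]
    refine setLIntegral_congr_fun measurableSet_Ioi fun γ hγ => ?_
    have hγ' : (0:ℝ) < γ := hγ
    rw [lintegral_const_mul' _ _ ENNReal.ofReal_ne_top]
    simp_rw [cntE_shift hρ hσ]
    rw [tint_trace_aux (herm_aux hρ hσ γ) hγ', ← ENNReal.ofReal_mul (by positivity)]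
    congr 1
    rw [show α - 1 = α - 2 + 1 by ring, Real.rpow_add_one hγ'.ne']
    field_simp
  · filter_upwards [ae_restrict_mem measurableSet_Ioi] with γ hγ
    have hγ' : (0:ℝ) < γ := hγ
    have := hf0 γ
    simp only [Pi.zero_apply]
    positivity
  · refine Measurable.aestronglyMeasurable ?_
    have := hfm.measurable
    fun_prop
  · filter_upwards [ae_restrict_mem measurableSet_Ioi] with t ht
    exact hXn t ht
  · refine (hmeas1.ennreal_toReal.aestronglyMeasurable).congr ?_
    filter_upwards [ae_restrict_mem measurableSet_Ioi] with t ht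
    rw [← hXe t ht, ENNReal.toReal_ofReal (hXn t ht)]

lemma neg_aux {n : ℕ} {A : Matrix (Fin n) (Fin n) ℂ} (hA : (-A).PosSemidef) :
    projPos A = 0 ∧ mposPart A = 0 := by
  have hH : A.IsHermitian := by simpa using hA.1.neg
  have hs : ∀ x ∈ spectrum ℝ A, x ≤ 0 := by
    intro x hx
    have : -x ∈ spectrum ℝ (-A) := by
      rw [← spectrum.neg_eq]; simpa using hx
    have := spec_nonneg_aux hA _ this
    linarith
  constructor
  · rw [projPos, ← cfc_const_zero ℝ A]
    exact cfc_congr fun x hx => by simp [hs x hx]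
  · rw [mposPart, ← cfc_const_zero ℝ A]
    exact cfc_congr fun x hx => by simp [hs x hx]

/-- for density matrices `ρ ≪ σ` and `α > 1`, the Hellinger divergence
`H_α`, defined by `(α-1)H_α + 1 = α ∫₀^∞ γ^{α-1} Tr[σ{ρ > γσ}] dγ`, satisfies
`H_α = -1/(α-1) + ∫₀^∞ Tr[((σ+t·1)^{-1/2} ρ (σ+t·1)^{-1/2})^α] dt`. -/
theorem hellinger_trace_representation {n : ℕ} (ρ σ : Matrix (Fin n) (Fin n) ℂ)
    (hρ : ρ.PosSemidef) (hσ : σ.PosSemidef) (hρ1 : ρ.trace = 1) (hσ1 : σ.trace = 1)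
    (hsupp : ∀ x : Fin n → ℂ, σ *ᵥ x = 0 → ρ *ᵥ x = 0)
    (α : ℝ) (hα : 1 < α) (H : ℝ)
    (hH : (α - 1) * H + 1
      = α * ∫ γ in Set.Ioi (0:ℝ),
            γ ^ (α - 1) * (Matrix.trace (σ * projPos (ρ - γ • σ))).re) :
    H = -1 / (α - 1) +
        ∫ t in Set.Ioi (0:ℝ),
          (Matrix.trace
            (mpow (mpow (σ + t • 1) (-(1/2)) * ρ * mpow (σ + t • 1) (-(1/2))) α)).re := by

  obtain ⟨C, hC0, hC⟩ := supp_aux hρ hσ hsupp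
  have key := ibp_aux (f := fun γ => (trace (mposPart (ρ - γ • σ))).re)
    (g := fun γ => (trace (σ * projPos (ρ - γ • σ))).re) (by
      intro a b
      have h1 := trace_proj_le_aux (herm_aux hρ hσ b) (herm_aux hρ hσ a)
      have h2 : ρ - b • σ = (ρ - a • σ) - (b - a) • σ := by module
      rw [← trace_proj_self_aux (herm_aux hρ hσ a)]
      refine le_trans (le_of_eq ?_) h1
      conv_rhs => rw [h2]
      simp only [sub_mul, trace_sub, smul_mul_assoc, trace_smul, Complex.sub_re, Complex.smul_re,
        smul_eq_mul])
    (fun a => trace_mul_nonneg_aux hσ (projPos_psd _))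
    (fun a => by
      have h1 := trace_mul_nonneg_aux hσ (one_sub_projPos_psd (herm_aux hρ hσ a))
      rw [mul_sub, mul_one, trace_sub, Complex.sub_re, hσ1, Complex.one_re] at h1
      linarith)
    hC0 (fun a ha => by simp [(neg_aux (hC a ha)).2]) (fun a ha => by simp [(neg_aux (hC a ha)).1])
    hα
  rw [tonelli_aux hρ hσ hα]
  rw [← key] at hH
  have h1 : α - 1 ≠ 0 := by linarith
  field_simp
  linarith
end
end

section
/- Let ρ, σ be density matrices with supp(ρ) ⊆ supp(σ) and α > 1. Define Q_α(ρ‖σ) := α ∫₀^∞ γ^{α-1} Tr[σ {ρ > γσ}] dγ. Then Q_α(ρ‖σ) ≤ Tr[(σ^{(1-α)/(2α)} ρ σ^{(1-α)/(2α)})^α], i.e., the layer-cake Rényi quantity is bounded by the sandwiched quasi Rényi divergence. -/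
open MeasureTheory Matrix
open scoped ComplexOrder
noncomputable section

lemma exists_diag {n : ℕ} {A : Matrix (Fin n) (Fin n) ℂ} (hA : A.IsHermitian) :
    ∃ (U : Matrix (Fin n) (Fin n) ℂ) (l : Fin n → ℝ), Uᴴ * U = 1 ∧ U * Uᴴ = 1 ∧
      A = U * diagonal (fun i => (l i : ℂ)) * Uᴴ ∧
      ∀ f : ℝ → ℝ, cfc f A = U * diagonal (fun i => (f (l i) : ℂ)) * Uᴴ := by
  refine ⟨hA.eigenvectorUnitary, hA.eigenvalues, ?_, ?_, ?_, ?_⟩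
  · exact Unitary.coe_star_mul_self hA.eigenvectorUnitary
  · exact Unitary.coe_mul_star_self hA.eigenvectorUnitary
  · conv_lhs => rw [hA.spectral_theorem]
    rfl
  · intro f
    rw [hA.cfc_eq f]
    rfl

/-- complex power, vanishing at base zero. -/
def pw (a : ℝ) (z : ℂ) : ℂ := if a = 0 then 0 else (a : ℂ) ^ z

lemma pw_norm {a : ℝ} (ha : 0 ≤ a) (z : ℂ) : ‖pw a z‖ = if a = 0 then 0 else a ^ z.re := by
  unfold pw
  split_ifs with h
  · simp
  · exact Complex.norm_cpow_eq_rpow_re_of_pos (lt_of_le_of_ne ha (Ne.symm h)) z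

lemma pw_norm_le_one {a : ℝ} (ha : 0 ≤ a) (z : ℂ) (hz : z.re = 0) : ‖pw a z‖ ≤ 1 := by
  rw [pw_norm ha, hz]; split_ifs <;> simp

lemma pw_norm_of_pos {a : ℝ} (ha : 0 ≤ a) (z : ℂ) (hz : 0 < z.re) : ‖pw a z‖ = a ^ z.re := by
  rw [pw_norm ha]; split_ifs with h
  · rw [h, Real.zero_rpow hz.ne']
  · rfl

lemma pw_ofReal {a : ℝ} (ha : 0 ≤ a) (r : ℝ) (hr : 0 < r) : pw a (r : ℂ) = ((a ^ r : ℝ) : ℂ) := by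
  unfold pw
  split_ifs with h
  · rw [h, Real.zero_rpow hr.ne']; simp
  · rw [Complex.ofReal_cpow ha]

lemma pw_add (a : ℝ) (z w : ℂ) : pw a (z + w) = pw a z * pw a w := by
  unfold pw
  split_ifs with h
  · simp
  · exact Complex.cpow_add _ _ (by exact_mod_cast h)

/-- differentiable and bounded on the strip. -/
def Good (f : ℂ → ℂ) : Prop :=
  Differentiable ℂ f ∧ ∃ C : ℝ, ∀ z : ℂ, 0 ≤ z.re → z.re ≤ 1 → ‖f z‖ ≤ C

lemma Good.const (c : ℂ) : Good (fun _ => c) := ⟨by fun_prop, ‖c‖, fun _ _ _ => le_rfl⟩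

lemma Good.mul {f g : ℂ → ℂ} (hf : Good f) (hg : Good g) : Good (fun z => f z * g z) := by
  obtain ⟨hf, C, hC⟩ := hf
  obtain ⟨hg, D, hD⟩ := hg
  refine ⟨hf.mul hg, C * D, fun z h0 h1 => ?_⟩
  rw [norm_mul]
  exact mul_le_mul (hC z h0 h1) (hD z h0 h1) (norm_nonneg _) ((norm_nonneg _).trans (hC z h0 h1))

lemma Good.sum {ι : Type*} (s : Finset ι) {f : ι → ℂ → ℂ} (hf : ∀ i, Good (f i)) :
    Good (fun z => ∑ i ∈ s, f i z) := by
  choose h C hC using hf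
  refine ⟨by fun_prop, ∑ i ∈ s, C i, fun z h0 h1 => ?_⟩
  exact (norm_sum_le _ _).trans (Finset.sum_le_sum fun i _ => hC i z h0 h1)

/-- matrix version -/
def GoodM {n : ℕ} (M : ℂ → Matrix (Fin n) (Fin n) ℂ) : Prop := ∀ i j, Good (fun z => M z i j)

lemma GoodM.const {n : ℕ} (M : Matrix (Fin n) (Fin n) ℂ) : GoodM (fun _ => M) :=
  fun _ _ => Good.const _

lemma GoodM.mul {n : ℕ} {M N : ℂ → Matrix (Fin n) (Fin n) ℂ} (hM : GoodM M) (hN : GoodM N) :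
    GoodM (fun z => M z * N z) := by
  intro i j
  simp only [Matrix.mul_apply]
  exact Good.sum _ fun k => (hM i k).mul (hN k j)

lemma GoodM.diag {n : ℕ} {d : Fin n → ℂ → ℂ} (hd : ∀ i, Good (d i)) :
    GoodM (fun z => diagonal (fun i => d i z)) := by
  intro i j
  by_cases h : i = j
  · subst h; simpa using hd i
  · simpa [h] using Good.const 0

lemma GoodM.trace {n : ℕ} {M : ℂ → Matrix (Fin n) (Fin n) ℂ} (hM : GoodM M) :
    Good (fun z => (M z).trace) := Good.sum _ fun i => hM i i

lemma Good.pw {a : ℝ} (ha : 0 ≤ a) (p q : ℝ) :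
    Good (fun z => pw a ((p : ℂ) + (q : ℂ) * z)) := by
  by_cases h : a = 0
  · simpa [_root_.pw, h] using Good.const 0
  have hpos : 0 < a := lt_of_le_of_ne ha (Ne.symm h)
  refine ⟨?_, a ^ p * max 1 (a ^ q), fun z h0 h1 => ?_⟩
  · simp only [_root_.pw, h, if_false]
    refine Differentiable.const_cpow (by fun_prop) (Or.inl (by exact_mod_cast h))
  · rw [pw_norm ha, if_neg h]
    have : ((p : ℂ) + (q : ℂ) * z).re = p + q * z.re := by simp
    rw [this, Real.rpow_add hpos, Real.rpow_mul ha]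
    gcongr
    have hq : 0 < a ^ q := Real.rpow_pos_of_pos hpos q
    rcases le_total (a ^ q) 1 with h | h
    · exact (Real.rpow_le_one hq.le h h0).trans (le_max_left _ _)
    · refine le_trans ?_ (le_max_right _ _)
      calc (a ^ q) ^ z.re ≤ (a ^ q) ^ (1:ℝ) := Real.rpow_le_rpow_of_exponent_le h h1
        _ = _ := Real.rpow_one _

lemma frob_eq {n : ℕ} (M : Matrix (Fin n) (Fin n) ℂ) :
    ((Mᴴ * M).trace).re = ∑ i, ∑ j, ‖M i j‖ ^ 2 := by
  simp only [Matrix.trace, Matrix.diag, Matrix.mul_apply, Complex.re_sum,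
    Matrix.conjTranspose_apply]
  rw [Finset.sum_comm]
  refine Finset.sum_congr rfl fun i _ => Finset.sum_congr rfl fun j _ => ?_
  rw [← Complex.normSq_eq_norm_sq]
  simp [Complex.normSq_apply]

lemma frob_unitary_left {n : ℕ} (A M : Matrix (Fin n) (Fin n) ℂ) (hA : Aᴴ * A = 1) :
    ∑ i, ∑ j, ‖(A * M) i j‖ ^ 2 = ∑ i, ∑ j, ‖M i j‖ ^ 2 := by
  rw [← frob_eq, ← frob_eq, Matrix.conjTranspose_mul, Matrix.mul_assoc, ← Matrix.mul_assoc Aᴴ, hA,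
    Matrix.one_mul]

lemma frob_unitary_right {n : ℕ} (A M : Matrix (Fin n) (Fin n) ℂ) (hA : A * Aᴴ = 1) :
    ∑ i, ∑ j, ‖(M * A) i j‖ ^ 2 = ∑ i, ∑ j, ‖M i j‖ ^ 2 := by
  rw [← frob_eq, ← frob_eq, Matrix.conjTranspose_mul, ← Matrix.mul_assoc, Matrix.trace_mul_comm,
    ← Matrix.mul_assoc, ← Matrix.mul_assoc, hA, Matrix.one_mul]

open scoped Matrix.Norms.L2Operator in
lemma entry_le_one {n : ℕ} (A B : Matrix (Fin n) (Fin n) ℂ) (hA : Aᴴ * A = 1) (hB : Bᴴ * B = 1)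
    (d e f : Fin n → ℂ) (hd : ∀ i, ‖d i‖ ≤ 1) (he : ∀ i, ‖e i‖ ≤ 1) (hf : ∀ i, ‖f i‖ ≤ 1)
    (i j : Fin n) :
    ‖(A * diagonal d * B * diagonal e * Bᴴ * diagonal f * Aᴴ) i j‖ ≤ 1 := by
  have hU : ∀ A : Matrix (Fin n) (Fin n) ℂ, Aᴴ * A = 1 → ‖A‖ ≤ 1 := by
    intro A hA
    rcases isEmpty_or_nonempty (Fin n) with h | h
    · have : A = 0 := Subsingleton.elim _ _
      simp [this]
    have h1 := Matrix.l2_opNorm_conjTranspose_mul_self A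
    rw [hA] at h1
    have : ‖(1 : Matrix (Fin n) (Fin n) ℂ)‖ = 1 := by
      rw [← Matrix.diagonal_one, Matrix.l2_opNorm_diagonal]; simp
    nlinarith [norm_nonneg A]
  have hD : ∀ d : Fin n → ℂ, (∀ i, ‖d i‖ ≤ 1) → ‖(diagonal d : Matrix (Fin n) (Fin n) ℂ)‖ ≤ 1 := by
    intro d hd
    rw [Matrix.l2_opNorm_diagonal]
    exact (pi_norm_le_iff_of_nonneg zero_le_one).2 hd
  have hm : ∀ M N : Matrix (Fin n) (Fin n) ℂ, ‖M‖ ≤ 1 → ‖N‖ ≤ 1 → ‖M * N‖ ≤ 1 := by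
    intro M N hM hN
    refine (Matrix.l2_opNorm_mul M N).trans ?_
    nlinarith [norm_nonneg M, norm_nonneg N]
  have hH : ∀ M : Matrix (Fin n) (Fin n) ℂ, ‖M‖ ≤ 1 → ‖Mᴴ‖ ≤ 1 := by
    intro M hM
    rwa [Matrix.l2_opNorm_conjTranspose]
  have htot : ‖A * diagonal d * B * diagonal e * Bᴴ * diagonal f * Aᴴ‖ ≤ 1 :=
    hm _ _ (hm _ _ (hm _ _ (hm _ _ (hm _ _ (hm _ _ (hU A hA) (hD d hd)) (hU B hB)) (hD e he))
      (hH _ (hU B hB))) (hD f hf)) (hH _ (hU A hA))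
  have hent : ∀ M : Matrix (Fin n) (Fin n) ℂ, ‖M i j‖ ≤ ‖M‖ := by
    intro M
    have h := Matrix.l2_opNorm_mulVec M (EuclideanSpace.single j (1:ℂ))
    rw [EuclideanSpace.norm_single, norm_one, mul_one] at h
    refine le_trans ?_ h
    have h2 := PiLp.norm_apply_le ((EuclideanSpace.equiv (Fin n) ℂ).symm
      (M *ᵥ (EuclideanSpace.single j (1:ℂ)))) i
    simpa using h2
  exact (hent _).trans htot

lemma alt_core {n : ℕ} (A B : Matrix (Fin n) (Fin n) ℂ) (hA : Aᴴ * A = 1)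
    (hB : Bᴴ * B = 1) (z x g : Fin n → ℝ) (hz : ∀ i, 0 ≤ z i) (hx : ∀ i, 0 ≤ x i)
    (hg : ∀ i, 0 ≤ g i) (α : ℝ) (hα : 1 < α)
    (h : diagonal (fun i => (z i : ℂ)) = A * diagonal (fun i => ((x i ^ (1/2:ℝ) : ℝ) : ℂ)) * B *
      diagonal (fun i => (g i : ℂ)) * Bᴴ * diagonal (fun i => ((x i ^ (1/2:ℝ) : ℝ) : ℂ)) * Aᴴ) :
    ∑ i, z i ^ α ≤ ∑ j, ∑ k, x j ^ α * ‖B j k‖ ^ 2 * g k ^ α := by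
  set T := ∑ i, z i ^ α with hT
  set R := ∑ j, ∑ k, x j ^ α * ‖B j k‖ ^ 2 * g k ^ α with hR
  have hα0 : 0 < α := by linarith
  let F : ℂ → ℂ := fun ζ => (diagonal (fun i => pw (z i) (((α:ℝ):ℂ) + ((-α : ℝ) : ℂ) * ζ)) *
    (A * diagonal (fun i => pw (x i) (((0:ℝ):ℂ) + ((α/2 : ℝ) : ℂ) * ζ)) * B *
      diagonal (fun i => pw (g i) (((0:ℝ):ℂ) + ((α : ℝ) : ℂ) * ζ)) * Bᴴ *
      diagonal (fun i => pw (x i) (((0:ℝ):ℂ) + ((α/2 : ℝ) : ℂ) * ζ)) * Aᴴ)).trace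
  have hgood : Good F := by
    apply GoodM.trace
    refine (GoodM.diag fun i => Good.pw (hz i) _ _).mul ?_
    exact ((((((GoodM.const A).mul (GoodM.diag fun i => Good.pw (hx i) _ _)).mul (GoodM.const B)).mul
      (GoodM.diag fun i => Good.pw (hg i) _ _)).mul (GoodM.const Bᴴ)).mul
      (GoodM.diag fun i => Good.pw (hx i) _ _)).mul (GoodM.const Aᴴ)
  obtain ⟨hdiff, C, hC⟩ := hgood
  have hT0 : 0 ≤ T := Finset.sum_nonneg fun i _ => Real.rpow_nonneg (hz i) _
  have hR0 : 0 ≤ R := Finset.sum_nonneg fun j _ => Finset.sum_nonneg fun k _ =>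
    mul_nonneg (mul_nonneg (Real.rpow_nonneg (hx j) _) (by positivity)) (Real.rpow_nonneg (hg k) _)
  -- left edge
  have hleft : ∀ ζ ∈ Complex.re ⁻¹' {(0:ℝ)}, ‖F ζ‖ ≤ T := by
    intro ζ hζ
    have hζ0 : ζ.re = 0 := hζ
    simp only [F, Matrix.trace, Matrix.diag, Matrix.diagonal_mul]
    refine (norm_sum_le _ _).trans (Finset.sum_le_sum fun i _ => ?_)
    rw [norm_mul, pw_norm_of_pos (hz i) _ (by simp [hζ0]; exact hα0)]
    have h1 := entry_le_one A B hA hB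
      (fun i => pw (x i) (((0:ℝ):ℂ) + ((α/2 : ℝ) : ℂ) * ζ))
      (fun i => pw (g i) (((0:ℝ):ℂ) + ((α : ℝ) : ℂ) * ζ))
      (fun i => pw (x i) (((0:ℝ):ℂ) + ((α/2 : ℝ) : ℂ) * ζ))
      (fun i => pw_norm_le_one (hx i) _ (by simp [hζ0]))
      (fun i => pw_norm_le_one (hg i) _ (by simp [hζ0]))
      (fun i => pw_norm_le_one (hx i) _ (by simp [hζ0])) i i
    have h2 : (((α:ℝ):ℂ) + ((-α : ℝ) : ℂ) * ζ).re = α := by simp [hζ0]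
    rw [h2]
    exact mul_le_of_le_one_right (Real.rpow_nonneg (hz i) _) h1
  have hright : ∀ ζ ∈ Complex.re ⁻¹' {(1:ℝ)}, ‖F ζ‖ ≤ R := by
    intro ζ hζ
    have hζ0 : ζ.re = 1 := hζ
    set w : ℂ := ((0:ℝ):ℂ) + ((α/2 : ℝ) : ℂ) * ζ with hw
    have hw1 : w.re = α / 2 := by simp [hw, hζ0]
    have hww : ((0:ℝ):ℂ) + ((α : ℝ) : ℂ) * ζ = w + w := by rw [hw]; push_cast; ring
    set M : Matrix (Fin n) (Fin n) ℂ := A * (diagonal (fun i => pw (x i) w) * B *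
      diagonal (fun i => pw (g i) w)) with hM
    set N : Matrix (Fin n) (Fin n) ℂ := (diagonal (fun i => pw (g i) w) * Bᴴ *
      diagonal (fun i => pw (x i) w)) * Aᴴ with hN
    have hF : F ζ = (diagonal (fun i => pw (z i) (((α:ℝ):ℂ) + ((-α : ℝ) : ℂ) * ζ)) *
        (M * N)).trace := by
      simp only [F]
      rw [hww]
      have : (diagonal (fun i => pw (g i) (w + w)) : Matrix (Fin n) (Fin n) ℂ) =
          diagonal (fun i => pw (g i) w) * diagonal (fun i => pw (g i) w) := by
        rw [Matrix.diagonal_mul_diagonal]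
        congr 1; funext i; exact pw_add _ _ _
      rw [this, hM, hN]
      simp only [Matrix.mul_assoc, hw]
    have hsq : ∀ a : ℝ, 0 ≤ a → ‖pw a w‖ ^ 2 = a ^ α := by
      intro a ha
      rw [pw_norm_of_pos ha _ (by rw [hw1]; positivity), hw1, ← Real.rpow_natCast, ← Real.rpow_mul ha]
      congr 1; push_cast; ring
    have hMf : ∑ i, ∑ j, ‖M i j‖ ^ 2 = R := by
      rw [hM, frob_unitary_left _ _ hA]
      refine Finset.sum_congr rfl fun j _ => Finset.sum_congr rfl fun k _ => ?_
      rw [Matrix.mul_diagonal, Matrix.diagonal_mul, norm_mul, norm_mul, mul_pow, mul_pow,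
        hsq _ (hx j), hsq _ (hg k)]
    have hNf : ∑ i, ∑ j, ‖N i j‖ ^ 2 = R := by
      rw [hN, frob_unitary_right _ _ (by rwa [Matrix.conjTranspose_conjTranspose]), Finset.sum_comm]
      refine Finset.sum_congr rfl fun j _ => Finset.sum_congr rfl fun k _ => ?_
      rw [Matrix.mul_diagonal, Matrix.diagonal_mul, norm_mul, norm_mul, mul_pow, mul_pow,
        hsq _ (hx j), hsq _ (hg k), Matrix.conjTranspose_apply, norm_star]
      ring
    rw [hF]
    simp only [Matrix.trace, Matrix.diag, Matrix.diagonal_mul]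
    calc _ ≤ ∑ i, ‖pw (z i) (((α:ℝ):ℂ) + ((-α : ℝ) : ℂ) * ζ) * (M * N) i i‖ := norm_sum_le _ _
      _ ≤ ∑ i, ∑ k, (‖M i k‖ ^ 2 + ‖N k i‖ ^ 2) / 2 := by
        refine Finset.sum_le_sum fun i _ => ?_
        rw [norm_mul]
        refine (mul_le_of_le_one_left (norm_nonneg _)
          (pw_norm_le_one (hz i) _ (by simp [hζ0]))).trans ?_
        rw [Matrix.mul_apply]
        refine (norm_sum_le _ _).trans (Finset.sum_le_sum fun k _ => ?_)
        rw [norm_mul]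
        nlinarith [sq_nonneg (‖M i k‖ - ‖N k i‖)]
      _ = ((∑ i, ∑ k, ‖M i k‖ ^ 2) + (∑ i, ∑ k, ‖N k i‖ ^ 2)) / 2 := by
        simp only [← Finset.sum_div, Finset.sum_add_distrib]
      _ = R := by
        rw [hMf, Finset.sum_comm, hNf]; ring
  have hmid : F ((1/α : ℝ) : ℂ) = (T : ℂ) := by
    simp only [F]
    have e1 : ((0:ℝ):ℂ) + ((α/2 : ℝ) : ℂ) * ((1/α : ℝ) : ℂ) = ((1/2 : ℝ) : ℂ) := by
      rw [← Complex.ofReal_mul, ← Complex.ofReal_add]; congr 1; field_simp; ring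
    have e2 : ((0:ℝ):ℂ) + ((α : ℝ) : ℂ) * ((1/α : ℝ) : ℂ) = ((1 : ℝ) : ℂ) := by
      rw [← Complex.ofReal_mul, ← Complex.ofReal_add]; congr 1; field_simp; ring
    have e3 : ((α:ℝ):ℂ) + ((-α : ℝ) : ℂ) * ((1/α : ℝ) : ℂ) = ((α - 1 : ℝ) : ℂ) := by
      rw [← Complex.ofReal_mul, ← Complex.ofReal_add]; congr 1; field_simp; ring
    rw [e1, e2, e3]
    have f1 : (fun i => pw (x i) ((1/2 : ℝ) : ℂ)) = fun i => ((x i ^ (1/2:ℝ) : ℝ) : ℂ) := by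
      funext i; exact pw_ofReal (hx i) _ (by norm_num)
    have f2 : (fun i => pw (g i) ((1 : ℝ) : ℂ)) = fun i => ((g i : ℝ) : ℂ) := by
      funext i; rw [pw_ofReal (hg i) _ (by norm_num), Real.rpow_one]
    have f3 : (fun i => pw (z i) ((α - 1 : ℝ) : ℂ)) = fun i => ((z i ^ (α - 1) : ℝ) : ℂ) := by
      funext i; exact pw_ofReal (hz i) _ (by linarith)
    rw [f1, f2, f3, ← h, Matrix.diagonal_mul_diagonal, Matrix.trace_diagonal, hT]
    push_cast
    refine Finset.sum_congr rfl fun i _ => ?_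
    rw [← Complex.ofReal_mul]
    congr 1
    rcases (hz i).eq_or_lt with h0 | h0
    · rw [← h0, Real.zero_rpow hα0.ne', mul_zero]
    · rw [← Real.rpow_add_one h0.ne']; congr 1; ring
  have h1α : 1 / α ≤ 1 := by rw [div_le_one hα0]; exact hα.le
  have h1α0 : 0 < 1 / α := by positivity
  have key := Complex.HadamardThreeLines.norm_le_interp_of_mem_verticalClosedStrip₀₁' F
    (z := ((1/α : ℝ) : ℂ)) (a := T) (b := R) ?_ hdiff.diffContOnCl ?_ hleft hright
  · rw [hmid, Complex.ofReal_re, Complex.norm_real, Real.norm_of_nonneg hT0] at key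
    rcases hT0.eq_or_lt with h0 | h0
    · rw [← h0]; exact hR0
    have h2 : T ^ (1/α) ≤ R ^ (1/α) := by
      have h3 : T = T ^ (1 - 1/α) * T ^ (1/α) := by
        rw [← Real.rpow_add h0]; simp
      have h4 : 0 < T ^ (1 - 1/α) := Real.rpow_pos_of_pos h0 _
      have h5 : T ^ (1 - 1/α) * T ^ (1/α) ≤ T ^ (1 - 1/α) * R ^ (1/α) := h3 ▸ key
      exact le_of_mul_le_mul_left h5 h4
    exact (Real.rpow_le_rpow_iff hT0 hR0 h1α0).1 h2
  · simp only [Complex.HadamardThreeLines.verticalClosedStrip, Set.mem_preimage, Complex.ofReal_re]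
    exact ⟨h1α0.le, h1α⟩
  · refine ⟨C, ?_⟩
    rintro _ ⟨ζ, hζ, rfl⟩
    exact hC ζ hζ.1 hζ.2

lemma quad_diag {n : ℕ} (U : Matrix (Fin n) (Fin n) ℂ) (l : Fin n → ℝ) (v : Fin n → ℂ) :
    (star v ⬝ᵥ (U * diagonal (fun i => (l i : ℂ)) * Uᴴ) *ᵥ v).re
      = ∑ i, l i * ‖(Uᴴ *ᵥ v) i‖ ^ 2 := by
  rw [← Matrix.mulVec_mulVec, ← Matrix.mulVec_mulVec, Matrix.dotProduct_mulVec]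
  have : star v ᵥ* U = star (Uᴴ *ᵥ v) := by
    rw [Matrix.star_mulVec, Matrix.conjTranspose_conjTranspose]
  rw [this]
  simp only [dotProduct, Matrix.mulVec_diagonal, Pi.star_apply, Complex.re_sum]
  refine Finset.sum_congr rfl fun i _ => ?_
  rw [← Complex.normSq_eq_norm_sq]
  simp [Complex.normSq_apply]
  ring

lemma quad_one {n : ℕ} (U : Matrix (Fin n) (Fin n) ℂ) (hU : U * Uᴴ = 1) (v : Fin n → ℂ) :
    (star v ⬝ᵥ v).re = ∑ i, ‖(Uᴴ *ᵥ v) i‖ ^ 2 := by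
  have := quad_diag U (fun _ => 1) v
  simpa [hU] using this

lemma count_le {n : ℕ} (U U' K : Matrix (Fin n) (Fin n) ℂ) (l l' : Fin n → ℝ)
    (hU : Uᴴ * U = 1) (hU1 : U * Uᴴ = 1) (hU' : U' * U'ᴴ = 1) (c c' : ℝ)
    (h : ∀ v : Fin n → ℂ, c * (star v ⬝ᵥ v).re <
        (star v ⬝ᵥ (U * diagonal (fun i => (l i : ℂ)) * Uᴴ) *ᵥ v).re →
      c' * (star (K *ᵥ v) ⬝ᵥ (K *ᵥ v)).re <
        (star (K *ᵥ v) ⬝ᵥ (U' * diagonal (fun i => (l' i : ℂ)) * U'ᴴ) *ᵥ (K *ᵥ v)).re) :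
    Fintype.card {i // c < l i} ≤ Fintype.card {i // c' < l' i} := by
  let T : Matrix {j // c' < l' j} {i // c < l i} ℂ := (U'ᴴ * K * U).submatrix Subtype.val Subtype.val
  have hinj : Function.Injective T.mulVecLin := by
    rw [injective_iff_map_eq_zero]
    intro a ha
    let e : Fin n → ℂ := fun i => if h : c < l i then a ⟨i, h⟩ else 0
    have hT : ∀ j : {j // c' < l' j}, ((U'ᴴ * K * U) *ᵥ e) j = 0 := by
      intro j
      have h1 : (T.mulVecLin a) j = 0 := by rw [ha]; rfl
      rw [← h1]
      simp only [Matrix.mulVecLin_apply, Matrix.mulVec, dotProduct, T, Matrix.submatrix_apply]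
      have h2 : ∀ i : {i // c < l i}, a i = e i := by
        intro i; simp only [e, dif_pos i.2]
      simp only [h2]
      rw [← Finset.sum_subtype (Finset.univ.filter (fun i => c < l i)) (by simp)
        (fun i => (U'ᴴ * K * U) j i * e i), Finset.sum_filter]
      refine Finset.sum_congr rfl fun i _ => ?_
      split_ifs with hi
      · rfl
      · simp [e, hi]
    by_contra hne
    set v := U *ᵥ e with hv
    have hUv : Uᴴ *ᵥ v = e := by rw [hv, Matrix.mulVec_mulVec, hU, Matrix.one_mulVec]
    have hpos := h v ?_
    · rw [quad_diag, quad_one U' hU', Finset.mul_sum] at hpos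
      refine absurd hpos (not_lt.2 (Finset.sum_le_sum fun j _ => ?_))
      by_cases hj : c' < l' j
      · have := hT ⟨j, hj⟩
        simp only at this
        have h3 : (U'ᴴ *ᵥ K *ᵥ v) j = 0 := by
          rw [hv, Matrix.mulVec_mulVec, Matrix.mulVec_mulVec]; exact this
        simp [h3]
      · exact mul_le_mul_of_nonneg_right (not_lt.1 hj) (by positivity)
    · rw [quad_diag, quad_one U hU1, Finset.mul_sum, hUv]
      obtain ⟨i, hi⟩ : ∃ i, a i ≠ 0 := by
        by_contra hcon
        push Not at hcon
        exact hne (funext hcon)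
      refine Finset.sum_lt_sum (fun i _ => ?_) ⟨i, Finset.mem_univ _, ?_⟩
      · by_cases hi : c < l i
        · exact mul_le_mul_of_nonneg_right hi.le (by positivity)
        · simp [e, hi]
      · have : e i = a i := by simp only [e, dif_pos i.2]
        rw [this]
        exact mul_lt_mul_of_pos_right i.2 (by positivity)
  have := LinearMap.finrank_le_finrank_of_injective hinj
  simpa using this

open scoped ENNReal in
lemma cnt_eq {n : ℕ} (l : Fin n → ℝ) (c : ℝ) :
    ((Fintype.card {i // c < l i} : ℕ) : ℝ≥0∞) = ∑ i, if c < l i then (1 : ℝ≥0∞) else 0 := by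
  rw [Fintype.card_subtype, Finset.sum_boole]

open scoped ENNReal in
lemma abstract_bound {n : ℕ} (α : ℝ) (hα : 1 < α) (l μ : ℝ → Fin n → ℝ) (c s : Fin n → ℝ)
    (hμ : ∀ t, 0 < t → ∀ j, 0 ≤ μ t j) (hc : ∀ k, 0 ≤ c k) (hs : ∀ k, 0 ≤ s k)
    (hanti : ∀ γ γ' t, 0 < γ → γ ≤ γ' → 0 < t →
      Fintype.card {i // γ' * t < l γ' i} ≤ Fintype.card {i // γ * t < l γ i})
    (hcmp : ∀ γ t, 0 < γ → 0 < t →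
      Fintype.card {i // γ * t < l γ i} ≤ Fintype.card {j // γ < μ t j})
    (hbd : ∀ t, 0 < t → ∑ j, μ t j ^ α ≤ ∑ k, c k * (s k ^ (α - 1) * (t + s k) ^ (-α))) :
    ENNReal.ofReal (α * (α - 1)) *
      ∫⁻ γ in Set.Ioi (0:ℝ), ENNReal.ofReal (γ ^ (α - 2) * ∑ i, max (l γ i) 0)
      ≤ ENNReal.ofReal (∑ k, c k) := by
  have hα0 : 0 < α := by linarith
  let N : ℝ → ℝ → ℝ≥0∞ := fun γ t =>
    if 0 < γ ∧ 0 < t then ((Fintype.card {i // γ * t < l γ i} : ℕ) : ℝ≥0∞) else 0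
  -- measurability
  have hmeas : Measurable (Function.uncurry N) := by
    let N' : ℝ × ℝ → ℕ := fun p =>
      if 0 < p.1 ∧ 0 < p.2 then Fintype.card {i // p.1 * p.2 < l p.1 i} else 0
    have hN' : Measurable N' := by
      refine measurable_of_Ici fun k => ?_
      rcases Nat.eq_zero_or_pos k with hk | hk
      · subst hk
        have : N' ⁻¹' Set.Ici 0 = Set.univ := by ext; simp
        rw [this]; exact MeasurableSet.univ
      have : N' ⁻¹' Set.Ici k = ⋃ q : ℚ, ({γ : ℝ | 0 < γ ∧ 0 < (q:ℝ) ∧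
          k ≤ Fintype.card {i // γ * q < l γ i}} ×ˢ Set.Ioo (0:ℝ) (q : ℝ)) := by
        ext ⟨γ, t⟩
        simp only [Set.mem_preimage, Set.mem_Ici, Set.mem_iUnion, Set.mem_prod, Set.mem_ofPred_eq,
          Set.mem_Ioo, N']
        constructor
        · intro h
          split_ifs at h with h0
          · obtain ⟨hγ, ht⟩ := h0
            -- right continuity
            have hev : ∀ᶠ q in nhdsWithin t (Set.Ioi t), ∀ i, γ * t < l γ i → γ * q < l γ i := by
              rw [Filter.eventually_all]
              intro i
              by_cases hi : γ * t < l γ i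
              · have hcont : Filter.Tendsto (fun q => γ * q) (nhdsWithin t (Set.Ioi t))
                    (nhds (γ * t)) := by
                  have : Continuous fun q : ℝ => γ * q := by fun_prop
                  exact (this.tendsto t).mono_left nhdsWithin_le_nhds
                filter_upwards [hcont.eventually (gt_mem_nhds hi)] with q hq _ using hq
              · simp [hi]
            obtain ⟨u, hu, hu'⟩ := (mem_nhdsGT_iff_exists_Ioo_subset).1 hev
            obtain ⟨q, hq1, hq2⟩ := exists_rat_btwn (show t < u from hu)
            refine ⟨q, ⟨hγ, ht.trans hq1, h.trans ?_⟩, ht, hq1⟩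
            exact Fintype.card_subtype_mono _ _ (fun i hi => hu' ⟨hq1, hq2⟩ i hi)
          · omega
        · rintro ⟨q, ⟨hγ, hq, hk'⟩, ht, htq⟩
          rw [if_pos ⟨hγ, ht⟩]
          refine hk'.trans (Fintype.card_subtype_mono _ _ fun i hi => lt_of_le_of_lt ?_ hi)
          exact mul_le_mul_of_nonneg_left htq.le hγ.le
      rw [this]
      refine MeasurableSet.iUnion fun q => MeasurableSet.prod ?_ measurableSet_Ioo
      refine Set.OrdConnected.measurableSet ⟨?_⟩
      rintro a ⟨ha, hq, _⟩ b ⟨hb, _, hbk⟩ x ⟨hax, hxb⟩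
      exact ⟨ha.trans_le hax, hq, hbk.trans (hanti _ _ _ (ha.trans_le hax) hxb hq)⟩
    have : Function.uncurry N = fun p => ((N' p : ℕ) : ℝ≥0∞) := by
      funext ⟨γ, t⟩
      simp only [Function.uncurry, N, N']
      split_ifs <;> simp
    rw [this]
    exact (measurable_from_top (f := fun k : ℕ => (k : ℝ≥0∞))).comp hN'
  -- step 1
  have step1 : ∀ γ, 0 < γ → ENNReal.ofReal (γ ^ (α - 2) * ∑ i, max (l γ i) 0) =
      ∫⁻ t in Set.Ioi (0:ℝ), ENNReal.ofReal (γ ^ (α - 1)) * N γ t := by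
    intro γ hγ
    have h1 : ∫⁻ t in Set.Ioi (0:ℝ), N γ t = ∑ i, ENNReal.ofReal (l γ i / γ) := by
      have : ∀ t ∈ Set.Ioi (0:ℝ), N γ t = ∑ i, (Set.Iio (l γ i / γ)).indicator (fun _ => (1:ℝ≥0∞)) t := by
        intro t ht
        simp only [N]
        rw [if_pos ⟨hγ, ht⟩, cnt_eq]
        refine Finset.sum_congr rfl fun i _ => ?_
        simp only [Set.indicator, Set.mem_Iio, lt_div_iff₀' hγ]
      rw [setLIntegral_congr_fun measurableSet_Ioi this,
        lintegral_finsetSum _ (fun i _ => measurable_const.indicator measurableSet_Iio)]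
      refine Finset.sum_congr rfl fun i _ => ?_
      rw [lintegral_indicator measurableSet_Iio, setLIntegral_const, one_mul,
        Measure.restrict_apply measurableSet_Iio, Set.inter_comm, Set.Ioi_inter_Iio, Real.volume_Ioo,
        sub_zero]
    rw [lintegral_const_mul _ (hmeas.of_uncurry_left), h1, Finset.mul_sum, Finset.mul_sum,
      ENNReal.ofReal_sum_of_nonneg (fun i _ => by positivity)]
    refine Finset.sum_congr rfl fun i _ => ?_
    rw [← ENNReal.ofReal_mul (by positivity)]
    have : γ ^ (α - 1) = γ ^ (α - 2) * γ := by
      rw [← Real.rpow_add_one hγ.ne']; congr 1; ring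
    rw [this, mul_assoc, mul_div_cancel₀ _ hγ.ne', ENNReal.ofReal_mul (by positivity),
      ENNReal.ofReal_mul (by positivity)]
    congr 1
    rcases le_total 0 (l γ i) with h | h
    · rw [max_eq_left h]
    · rw [max_eq_right h, ENNReal.ofReal_of_nonpos h, ENNReal.ofReal_zero]
  have hmul : Measurable (Function.uncurry fun γ t => ENNReal.ofReal (γ ^ (α - 1)) * N γ t) := by
    have : Measurable fun p : ℝ × ℝ => ENNReal.ofReal (p.1 ^ (α - 1)) := by fun_prop
    exact this.mul hmeas
  rw [setLIntegral_congr_fun measurableSet_Ioi (fun γ hγ => step1 γ hγ),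
    lintegral_lintegral_swap hmul.aemeasurable]
  -- step 3
  have step3 : ∀ t, 0 < t → ∫⁻ γ in Set.Ioi (0:ℝ), ENNReal.ofReal (γ ^ (α - 1)) * N γ t ≤
      ∑ k, ENNReal.ofReal (c k * s k ^ (α - 1) / α) * ENNReal.ofReal ((t + s k) ^ (-α)) := by
    intro t ht
    have h1 : ∀ γ ∈ Set.Ioi (0:ℝ), ENNReal.ofReal (γ ^ (α - 1)) * N γ t ≤
        ∑ j, (Set.Iio (μ t j)).indicator (fun γ => ENNReal.ofReal (γ ^ (α - 1))) γ := by
      intro γ hγ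
      simp only [N]
      rw [if_pos ⟨hγ, ht⟩]
      calc _ ≤ ENNReal.ofReal (γ ^ (α - 1)) * ((Fintype.card {j // γ < μ t j} : ℕ) : ℝ≥0∞) := by
            gcongr; exact hcmp γ t hγ ht
        _ = _ := by
            rw [cnt_eq, Finset.mul_sum]
            refine Finset.sum_congr rfl fun i _ => ?_
            simp only [Set.indicator, Set.mem_Iio, mul_ite, mul_one, mul_zero]
    have hm : Measurable fun γ : ℝ => ENNReal.ofReal (γ ^ (α - 1)) := by fun_prop
    calc _ ≤ ∫⁻ γ in Set.Ioi (0:ℝ),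
          ∑ j, (Set.Iio (μ t j)).indicator (fun γ => ENNReal.ofReal (γ ^ (α - 1))) γ :=
          setLIntegral_mono' measurableSet_Ioi h1
      _ = ∑ j, ENNReal.ofReal (μ t j ^ α / α) := by
          rw [lintegral_finsetSum _ (fun i _ => hm.indicator measurableSet_Iio)]
          refine Finset.sum_congr rfl fun j _ => ?_
          rw [lintegral_indicator measurableSet_Iio, Measure.restrict_restrict measurableSet_Iio,
            Set.inter_comm, Set.Ioi_inter_Iio, restrict_Ioo_eq_restrict_Ioc,
            ← ofReal_integral_eq_lintegral_ofReal,
            ← intervalIntegral.integral_of_le (hμ t ht j), integral_rpow (Or.inl (by linarith))]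
          · congr 1
            rw [sub_add_cancel, Real.zero_rpow hα0.ne', sub_zero]
          · exact (intervalIntegrable_iff_integrableOn_Ioc_of_le (hμ t ht j)).1
              (intervalIntegral.intervalIntegrable_rpow' (by linarith))
          · refine (ae_restrict_iff' measurableSet_Ioc).2 (Filter.Eventually.of_forall fun γ hγ => ?_)
            exact Real.rpow_nonneg hγ.1.le _
      _ = ENNReal.ofReal (1/α * ∑ j, μ t j ^ α) := by
          rw [Finset.mul_sum, ENNReal.ofReal_sum_of_nonneg
            (fun j _ => mul_nonneg (by positivity) (Real.rpow_nonneg (hμ t ht j) _))]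
          refine Finset.sum_congr rfl fun j _ => ?_
          congr 1; ring
      _ ≤ ENNReal.ofReal (1/α * ∑ k, c k * (s k ^ (α - 1) * (t + s k) ^ (-α))) := by
          exact ENNReal.ofReal_le_ofReal (mul_le_mul_of_nonneg_left (hbd t ht) (by positivity))
      _ = _ := by
          have hk : ∀ k, 0 ≤ s k ^ (α - 1) := fun k => Real.rpow_nonneg (hs k) _
          have hk' : ∀ k, 0 ≤ (t + s k) ^ (-α) := fun k => Real.rpow_nonneg (by linarith [hs k]) _
          rw [Finset.mul_sum, ENNReal.ofReal_sum_of_nonneg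
            (fun k _ => mul_nonneg (by positivity) (mul_nonneg (hc k) (mul_nonneg (hk k) (hk' k))))]
          refine Finset.sum_congr rfl fun k _ => ?_
          rw [← ENNReal.ofReal_mul (div_nonneg (mul_nonneg (hc k) (hk k)) hα0.le)]
          congr 1; ring
  calc _ ≤ ENNReal.ofReal (α * (α - 1)) * ∫⁻ t in Set.Ioi (0:ℝ),
        ∑ k, ENNReal.ofReal (c k * s k ^ (α - 1) / α) * ENNReal.ofReal ((t + s k) ^ (-α)) := by
        exact mul_le_mul_right (setLIntegral_mono' measurableSet_Ioi step3) _
    _ = ∑ k, ENNReal.ofReal (α * (α - 1)) * (ENNReal.ofReal (c k * s k ^ (α - 1) / α) *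
          ∫⁻ t in Set.Ioi (0:ℝ), ENNReal.ofReal ((t + s k) ^ (-α))) := by
        have hm : ∀ k, Measurable fun t : ℝ => ENNReal.ofReal ((t + s k) ^ (-α)) := by
          intro k; fun_prop
        rw [lintegral_finsetSum _ (fun k _ => (hm k).const_mul _), Finset.mul_sum]
        refine Finset.sum_congr rfl fun k _ => ?_
        rw [lintegral_const_mul _ (hm k)]
    _ ≤ ∑ k, ENNReal.ofReal (c k) := by
        refine Finset.sum_le_sum fun k _ => ?_
        rcases (hs k).eq_or_lt with h0 | h0
        · rw [← h0, Real.zero_rpow (by linarith)]; simp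
        · have hintg : ∫⁻ t in Set.Ioi (0:ℝ), ENNReal.ofReal ((t + s k) ^ (-α)) =
              ENNReal.ofReal (s k ^ (1 - α) / (α - 1)) := by
            have hmp := (measurePreserving_add_right (volume : Measure ℝ) (s k)).setLIntegral_comp_preimage
              (s := Set.Ioi (s k)) measurableSet_Ioi
              (f := fun u => ENNReal.ofReal (u ^ (-α))) (by fun_prop)
            have hpre : (fun x => x + s k) ⁻¹' Set.Ioi (s k) = Set.Ioi (0:ℝ) := by
              ext x; simp
            rw [hpre] at hmp
            rw [hmp, ← ofReal_integral_eq_lintegral_ofReal, integral_Ioi_rpow_of_lt (by linarith) h0]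
            · congr 1
              have e1 : -α + 1 = -(α - 1) := by ring
              have e2 : 1 - α = -(α - 1) := by ring
              rw [e1, e2, neg_div_neg_eq]
            · exact integrableOn_Ioi_rpow_of_lt (by linarith) h0
            · refine (ae_restrict_iff' measurableSet_Ioi).2 (Filter.Eventually.of_forall fun γ hγ => ?_)
              exact Real.rpow_nonneg (h0.trans hγ).le _
          rw [hintg, ← ENNReal.ofReal_mul (by have := hc k; positivity),
            ← ENNReal.ofReal_mul (by nlinarith)]
          apply le_of_eq
          congr 1
          have h3 : s k ^ (α - 1) * s k ^ (1 - α) = 1 := by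
            rw [← Real.rpow_add h0]; simp
          have : α - 1 ≠ 0 := by linarith
          field_simp
          linear_combination (c k) * h3
    _ = _ := (ENNReal.ofReal_sum_of_nonneg fun k _ => hc k).symm

lemma scaling_bound (α : ℝ) (hα : 1 < α) (φ t : ℝ → ℝ) (hφ0 : ∀ γ, 0 ≤ φ γ) (ht0 : ∀ γ, 0 ≤ t γ)
    (hsub : ∀ x γ, φ γ + (γ - x) * t γ ≤ φ x) (C : ℝ) (hC : 0 ≤ C)
    (hΦ : ENNReal.ofReal (α * (α - 1)) *
      ∫⁻ γ in Set.Ioi (0:ℝ), ENNReal.ofReal (γ ^ (α - 2) * φ γ) ≤ ENNReal.ofReal C) :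
    α * ∫ γ in Set.Ioi (0:ℝ), γ ^ (α - 1) * t γ ≤ C := by
  by_cases hintg : IntegrableOn (fun γ => γ ^ (α - 1) * t γ) (Set.Ioi 0)
  swap
  · rw [integral_undef hintg, mul_zero]; exact hC
  have hα1 : 0 < α * (α - 1) := mul_pos (by linarith) (by linarith)
  have hanti : Antitone φ := by
    intro x γ h
    nlinarith [hsub x γ, ht0 γ, mul_nonneg (sub_nonneg.2 h) (ht0 γ)]
  set f : ℝ → ℝ := fun γ => γ ^ (α - 2) * φ γ with hf
  have hfm : Measurable f := by
    have : Measurable fun γ : ℝ => γ ^ (α - 2) := by fun_prop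
    exact this.mul hanti.measurable
  have hf0 : 0 ≤ᵐ[volume.restrict (Set.Ioi (0:ℝ))] f :=
    (ae_restrict_iff' measurableSet_Ioi).2 (Filter.Eventually.of_forall fun γ hγ =>
      mul_nonneg (Real.rpow_nonneg (le_of_lt hγ) _) (hφ0 γ))
  have hfi : IntegrableOn f (Set.Ioi 0) := by
    refine ⟨hfm.aestronglyMeasurable, ?_⟩
    rw [hasFiniteIntegral_iff_ofReal hf0]
    by_contra hcon
    rw [not_lt, top_le_iff] at hcon
    rw [hcon, ENNReal.mul_top (by simpa using hα1)] at hΦ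
    exact absurd hΦ (by simp)
  set Φ := ∫ γ in Set.Ioi (0:ℝ), f γ with hΦdef
  have hΦC : α * (α - 1) * Φ ≤ C := by
    rw [← ofReal_integral_eq_lintegral_ofReal hfi hf0, ← ENNReal.ofReal_mul hα1.le] at hΦ
    exact (ENNReal.ofReal_le_ofReal_iff hC).1 hΦ
  set I := ∫ γ in Set.Ioi (0:ℝ), γ ^ (α - 1) * t γ with hI
  -- scaled inequality
  have hscale : ∀ a : ℝ, 0 < a → a < 1 → (1 - a) * I ≤ (a ^ (1 - α) - 1) * Φ := by
    intro a ha ha1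
    have hcomp : ∫ γ in Set.Ioi (0:ℝ), f (a * γ) = a⁻¹ * Φ := by
      have := integral_comp_mul_left_Ioi f 0 ha
      rwa [mul_zero, smul_eq_mul] at this
    have hcompi : IntegrableOn (fun γ => f (a * γ)) (Set.Ioi 0) := by
      have := (integrableOn_Ioi_comp_mul_left_iff f 0 ha)
      rw [mul_zero] at this
      exact this.2 hfi
    have h2 : (a ^ (1 - α) - 1) * Φ =
        ∫ γ in Set.Ioi (0:ℝ), (a ^ (2 - α) * f (a * γ) - f γ) := by
      rw [integral_sub (hcompi.const_mul _) hfi, integral_const_mul, hcomp, ← mul_assoc]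
      have : a ^ (2 - α) * a⁻¹ = a ^ (1 - α) := by
        rw [← Real.rpow_neg_one, ← Real.rpow_add ha]; congr 1; ring
      rw [this]; ring
    rw [h2, hI, ← integral_const_mul]
    refine setIntegral_mono_on (hintg.const_mul _) ((hcompi.const_mul _).sub hfi) measurableSet_Ioi ?_
    intro γ hγ
    have hγ' : (0:ℝ) < γ := hγ
    have e1 : a ^ (2 - α) * f (a * γ) = γ ^ (α - 2) * φ (a * γ) := by
      simp only [hf]
      rw [Real.mul_rpow ha.le hγ'.le, ← mul_assoc, ← mul_assoc, ← Real.rpow_add ha]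
      simp
    have e2 : γ ^ (α - 1) = γ ^ (α - 2) * γ := by
      rw [← Real.rpow_add_one hγ'.ne']; congr 1; ring
    rw [e1, e2]
    simp only [hf]
    have h3 := hsub (a * γ) γ
    have h4 : 0 ≤ γ ^ (α - 2) := Real.rpow_nonneg hγ'.le _
    nlinarith [mul_le_mul_of_nonneg_left h3 h4]
  -- limit
  have hlim : I ≤ (α - 1) * Φ := by
    have hd : HasDerivAt (fun a : ℝ => a ^ (1 - α)) ((1 - α) * 1 ^ (1 - α - 1)) 1 :=
      Real.hasDerivAt_rpow_const (Or.inl one_ne_zero)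
    rw [Real.one_rpow, mul_one] at hd
    have hs := hd.hasDerivWithinAt (s := Set.Iio 1)
    rw [hasDerivWithinAt_iff_tendsto_slope' (by simp)] at hs
    have hs2 : Filter.Tendsto (fun a => - slope (fun a : ℝ => a ^ (1 - α)) 1 a * Φ)
        (nhdsWithin 1 (Set.Iio 1)) (nhds (-(1 - α) * Φ)) := hs.neg.mul_const _
    have : (α - 1) * Φ = -(1 - α) * Φ := by ring
    rw [this]
    refine ge_of_tendsto hs2 ?_
    filter_upwards [Ioo_mem_nhdsLT (show (0:ℝ) < 1 by norm_num)] with a ha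
    rw [slope_def_field, Real.one_rpow]
    have h5 := hscale a ha.1 ha.2
    have h6 : 0 < 1 - a := by linarith [ha.2]
    have h7 : -((a ^ (1 - α) - 1) / (a - 1)) * Φ = (a ^ (1 - α) - 1) * Φ / (1 - a) := by
      rw [← neg_sub 1 a, div_neg, neg_neg]; ring
    rw [h7, le_div_iff₀ h6]
    linarith
  nlinarith

lemma trace_two {n : ℕ} (U V : Matrix (Fin n) (Fin n) ℂ) (l d : Fin n → ℝ) :
    (Matrix.trace ((U * diagonal (fun i => (l i : ℂ)) * Uᴴ) *
      (V * diagonal (fun i => (d i : ℂ)) * Vᴴ))).re = ∑ i, ∑ j, l i * d j * ‖(Uᴴ * V) i j‖ ^ 2 := by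
  have h1 : Matrix.trace ((U * diagonal (fun i => (l i : ℂ)) * Uᴴ) *
      (V * diagonal (fun i => (d i : ℂ)) * Vᴴ)) =
      Matrix.trace (diagonal (fun i => (l i : ℂ)) * ((Uᴴ * V) * diagonal (fun i => (d i : ℂ)) *
        (Uᴴ * V)ᴴ)) := by
    rw [Matrix.mul_assoc U, Matrix.mul_assoc U, Matrix.trace_mul_comm U, Matrix.conjTranspose_mul,
      Matrix.conjTranspose_conjTranspose]
    simp only [Matrix.mul_assoc]
  rw [h1]
  simp only [Matrix.trace, Matrix.diag, Matrix.diagonal_mul, Complex.re_sum]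
  refine Finset.sum_congr rfl fun i _ => ?_
  rw [Matrix.mul_apply, Finset.mul_sum, Complex.re_sum]
  refine Finset.sum_congr rfl fun j _ => ?_
  rw [Matrix.mul_diagonal, Matrix.conjTranspose_apply, ← Complex.normSq_eq_norm_sq]
  simp [Complex.normSq_apply]
  ring

lemma row_sum {n : ℕ} (B : Matrix (Fin n) (Fin n) ℂ) (hB : B * Bᴴ = 1) (i : Fin n) :
    ∑ j, ‖B i j‖ ^ 2 = 1 := by
  have h := congrArg Complex.re (congrFun (congrFun hB i) i)
  rw [Matrix.mul_apply, Matrix.one_apply_eq, Complex.one_re, Complex.re_sum] at h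
  rw [← h]
  refine Finset.sum_congr rfl fun j _ => ?_
  rw [Matrix.conjTranspose_apply, ← Complex.normSq_eq_norm_sq]
  simp [Complex.normSq_apply]

lemma diag_nonneg {n : ℕ} {M U : Matrix (Fin n) (Fin n) ℂ} {l : Fin n → ℝ} (hM : M.PosSemidef)
    (hU : Uᴴ * U = 1) (h : M = U * diagonal (fun i => (l i : ℂ)) * Uᴴ) (i : Fin n) : 0 ≤ l i := by
  have h1 := hM.conjTranspose_mul_mul_same U
  have h2 : Uᴴ * M * U = diagonal (fun i => (l i : ℂ)) := by
    rw [h]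
    calc _ = (Uᴴ * U) * diagonal (fun i => (l i : ℂ)) * (Uᴴ * U) := by simp only [Matrix.mul_assoc]
      _ = _ := by rw [hU, Matrix.one_mul, Matrix.mul_one]
  rw [h2, Matrix.posSemidef_diagonal_iff] at h1
  exact_mod_cast h1 i

lemma conjd_mul {n : ℕ} (W : Matrix (Fin n) (Fin n) ℂ) (hW : Wᴴ * W = 1) (a b : Fin n → ℝ) :
    (W * diagonal (fun i => (a i : ℂ)) * Wᴴ) * (W * diagonal (fun i => (b i : ℂ)) * Wᴴ) =
      W * diagonal (fun i => ((a i * b i : ℝ) : ℂ)) * Wᴴ := by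
  calc _ = W * diagonal (fun i => (a i : ℂ)) * (Wᴴ * W) * diagonal (fun i => (b i : ℂ)) * Wᴴ := by
        simp only [Matrix.mul_assoc]
    _ = _ := by
        rw [hW, Matrix.mul_one, Matrix.mul_assoc W, Matrix.diagonal_mul_diagonal]
        simp only [Complex.ofReal_mul]

lemma conjd_herm {n : ℕ} (W : Matrix (Fin n) (Fin n) ℂ) (a : Fin n → ℝ) :
    (W * diagonal (fun i => (a i : ℂ)) * Wᴴ)ᴴ = W * diagonal (fun i => (a i : ℂ)) * Wᴴ := by
  rw [Matrix.conjTranspose_mul, Matrix.conjTranspose_mul, Matrix.conjTranspose_conjTranspose,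
    Matrix.diagonal_conjTranspose, Matrix.mul_assoc]
  congr 3
  funext i
  simp

lemma conjd_psd {n : ℕ} (W : Matrix (Fin n) (Fin n) ℂ) (a : Fin n → ℝ) (ha : ∀ i, 0 ≤ a i) :
    (W * diagonal (fun i => (a i : ℂ)) * Wᴴ).PosSemidef := by
  apply Matrix.PosSemidef.mul_mul_conjTranspose_same
  rw [Matrix.posSemidef_diagonal_iff]
  intro i
  exact_mod_cast ha i

lemma quad_sub_smul {n : ℕ} (M N : Matrix (Fin n) (Fin n) ℂ) (γ : ℝ) (v : Fin n → ℂ) :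
    (star v ⬝ᵥ (M - γ • N) *ᵥ v).re = (star v ⬝ᵥ M *ᵥ v).re - γ * (star v ⬝ᵥ N *ᵥ v).re := by
  rw [Matrix.sub_mulVec, dotProduct_sub, Matrix.smul_mulVec, dotProduct_smul, Complex.sub_re,
    Complex.smul_re, smul_eq_mul]

lemma quad_conj {n : ℕ} (K M : Matrix (Fin n) (Fin n) ℂ) (v : Fin n → ℂ) :
    star (K *ᵥ v) ⬝ᵥ M *ᵥ (K *ᵥ v) = star v ⬝ᵥ (Kᴴ * M * K) *ᵥ v := by
  rw [Matrix.star_mulVec, ← Matrix.dotProduct_mulVec]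
  simp only [Matrix.mulVec_mulVec, Matrix.mul_assoc]

lemma psd_re {n : ℕ} {M : Matrix (Fin n) (Fin n) ℂ} (hM : M.PosSemidef) (v : Fin n → ℂ) :
    0 ≤ (star v ⬝ᵥ M *ᵥ v).re := by
  have := hM.dotProduct_mulVec_nonneg v
  exact (Complex.le_def.1 this).1

lemma schur_step {n : ℕ} (ρ σ K A Ai : Matrix (Fin n) (Fin n) ℂ) (hρ : ρ.IsHermitian)
    (hK : Kᴴ * K = ρ) (t γ : ℝ)
    (hA : A = σ + t • (1 : Matrix (Fin n) (Fin n) ℂ)) (hAh : A.IsHermitian)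
    (h1 : A * Ai = 1) (h2 : Ai * A = 1) (hAi : Ai.PosSemidef) (hγ : 0 < γ) (v : Fin n → ℂ)
    (h : γ * t * (star v ⬝ᵥ v).re < (star v ⬝ᵥ (ρ - γ • σ) *ᵥ v).re) :
    γ * (star (K *ᵥ v) ⬝ᵥ (K *ᵥ v)).re <
      (star (K *ᵥ v) ⬝ᵥ (K * Ai * Kᴴ) *ᵥ (K *ᵥ v)).re := by
  have e1 : star (K *ᵥ v) ⬝ᵥ (K *ᵥ v) = star v ⬝ᵥ ρ *ᵥ v := by
    have := quad_conj K 1 v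
    rwa [Matrix.one_mulVec, Matrix.mul_one, hK] at this
  have e2 : Kᴴ * (K * Ai * Kᴴ) * K = ρ * Ai * ρ := by
    rw [← hK]; simp only [Matrix.mul_assoc]
  rw [e1, quad_conj, e2]
  rw [quad_sub_smul] at h
  have hpsd : ((ρ - γ • A)ᴴ * Ai * (ρ - γ • A)).PosSemidef := hAi.conjTranspose_mul_mul_same _
  have hh : (ρ - γ • A)ᴴ = ρ - γ • A := by
    rw [Matrix.conjTranspose_sub, Matrix.conjTranspose_smul, hρ.eq, hAh.eq]; simp
  have hexp : (ρ - γ • A)ᴴ * Ai * (ρ - γ • A) = ρ * Ai * ρ - γ • ((2:ℝ) • ρ - γ • A) := by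
    rw [hh]
    simp only [Matrix.sub_mul, Matrix.mul_sub, Matrix.smul_mul, Matrix.mul_smul, h1, Matrix.one_mul,
      Matrix.mul_assoc, h2, Matrix.mul_one]
    module
  rw [hexp] at hpsd
  have h3 := psd_re hpsd v
  rw [quad_sub_smul, quad_sub_smul] at h3
  have h4 : (star v ⬝ᵥ ((2:ℝ) • ρ) *ᵥ v).re = 2 * (star v ⬝ᵥ ρ *ᵥ v).re := by
    rw [Matrix.smul_mulVec, dotProduct_smul, Complex.smul_re, smul_eq_mul]
  have h5 : (star v ⬝ᵥ A *ᵥ v).re = (star v ⬝ᵥ σ *ᵥ v).re + t * (star v ⬝ᵥ v).re := by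
    rw [hA, Matrix.add_mulVec, dotProduct_add, Matrix.smul_mulVec, Matrix.one_mulVec,
      dotProduct_smul, Complex.add_re, Complex.smul_re, smul_eq_mul]
  rw [h4, h5] at h3
  have h6 := mul_lt_mul_of_pos_left h hγ
  nlinarith

/-- for density matrices `ρ ≪ σ` and `α > 1`, the layer-cake quantity
`Q_α(ρ‖σ) = α ∫₀^∞ γ^{α-1} Tr[σ{ρ > γσ}] dγ` is bounded by the sandwiched quasi
Rényi divergence `Tr[(σ^{(1-α)/(2α)} ρ σ^{(1-α)/(2α)})^α]`. -/
theorem layerCake_le_sandwiched {n : ℕ} (ρ σ : Matrix (Fin n) (Fin n) ℂ)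
    (hρ : ρ.PosSemidef) (hσ : σ.PosSemidef) (hρ1 : ρ.trace = 1) (hσ1 : σ.trace = 1)
    (hsupp : ∀ x : Fin n → ℂ, σ *ᵥ x = 0 → ρ *ᵥ x = 0)
    (α : ℝ) (hα : 1 < α) :
    α * (∫ γ in Set.Ioi (0:ℝ),
          γ ^ (α - 1) * (Matrix.trace (σ * projPos (ρ - γ • σ))).re)
      ≤ (Matrix.trace
          (mpow (mpow σ ((1 - α) / (2 * α)) * ρ * mpow σ ((1 - α) / (2 * α))) α)).re := by
  have hα0 : 0 < α := by linarith
  set e : ℝ := (1 - α) / (2 * α) with he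
  have he0 : e < 0 := div_neg_of_neg_of_pos (by linarith) (by linarith)
  -- diagonalise σ
  obtain ⟨W, s, hW, hW', hσd, hσf⟩ := exists_diag hσ.1
  have hs : ∀ i, 0 ≤ s i := diag_nonneg hσ hW hσd
  set Si := mpow σ e with hSi
  have hSid : Si = W * diagonal (fun i => ((s i ^ e : ℝ) : ℂ)) * Wᴴ := hσf _
  have hSiH : Siᴴ = Si := by rw [hSid]; exact conjd_herm _ _
  have hX : (Si * ρ * Si).PosSemidef := by
    have := hρ.conjTranspose_mul_mul_same Si
    rwa [hSiH] at this
  set X := Si * ρ * Si with hXdef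
  obtain ⟨V, x, hV, hV', hXd, hXf⟩ := exists_diag hX.1
  have hx : ∀ i, 0 ≤ x i := diag_nonneg hX hV hXd
  have hRHS : (Matrix.trace (mpow X α)).re = ∑ j, x j ^ α := by
    have : mpow X α = V * diagonal (fun i => ((x i ^ α : ℝ) : ℂ)) * Vᴴ := hXf _
    rw [this, Matrix.mul_assoc, Matrix.trace_mul_comm, Matrix.mul_assoc, hV, Matrix.mul_one,
      Matrix.trace_diagonal, Complex.re_sum]
    simp only [Complex.ofReal_re]
  rw [hRHS]
  -- S, support projection
  set S : Matrix (Fin n) (Fin n) ℂ := W * diagonal (fun i => ((s i ^ (-e) : ℝ) : ℂ)) * Wᴴ with hS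
  have hSH : Sᴴ = S := conjd_herm _ _
  set p : Fin n → ℝ := fun i => s i ^ e * s i ^ (-e) with hp
  set Pr : Matrix (Fin n) (Fin n) ℂ := W * diagonal (fun i => (p i : ℂ)) * Wᴴ with hPr
  have hPrH : Prᴴ = Pr := conjd_herm _ _
  have hSiS : Si * S = Pr := by rw [hSid, hS, conjd_mul W hW]
  have hSSi : S * Si = Pr := by
    rw [hSid, hS, conjd_mul W hW, hPr]
    simp only [hp, mul_comm]
  have hσPr : σ * Pr = σ := by
    conv_rhs => rw [hσd]
    rw [hσd, hPr, conjd_mul W hW]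
    congr 3
    funext i
    congr 1
    rcases (hs i).eq_or_lt with h0 | h0
    · rw [← h0, zero_mul]
    · simp only [hp]; rw [← Real.rpow_add h0]; simp
  have hρPr : ρ * Pr = ρ := by
    have h0 : ρ * (1 - Pr) = 0 := by
      apply Matrix.ext_of_mulVec_single
      intro i
      rw [← Matrix.mulVec_mulVec, Matrix.zero_mulVec]
      apply hsupp
      rw [Matrix.mulVec_mulVec, Matrix.mul_sub, Matrix.mul_one, hσPr, sub_self, Matrix.zero_mulVec]
    rw [Matrix.mul_sub, Matrix.mul_one, sub_eq_zero] at h0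
    exact h0.symm
  have hPrρ : Pr * ρ = ρ := by
    have := congrArg Matrix.conjTranspose hρPr
    rwa [Matrix.conjTranspose_mul, hPrH, hρ.1.eq] at this
  -- K
  set Q : Matrix (Fin n) (Fin n) ℂ := V * diagonal (fun i => ((x i ^ (1/2:ℝ) : ℝ) : ℂ)) * Vᴴ with hQ
  have hQH : Qᴴ = Q := conjd_herm _ _
  have hQQ : Q * Q = X := by
    rw [hQ, conjd_mul V hV]
    conv_rhs => rw [hXd]
    congr 3
    funext i
    rw [← Real.rpow_add' (hx i) (by norm_num)]; norm_num
  set K := Q * S with hK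
  have hKH : Kᴴ = S * Q := by rw [hK, Matrix.conjTranspose_mul, hSH, hQH]
  have hKK : Kᴴ * K = ρ := by
    rw [hKH, hK]
    calc S * Q * (Q * S) = S * (Q * Q) * S := by simp only [Matrix.mul_assoc]
      _ = (S * Si) * ρ * (Si * S) := by rw [hQQ, hXdef]; simp only [Matrix.mul_assoc]
      _ = ρ := by rw [hSSi, hSiS, hPrρ, hρPr]
  -- resolvents
  let A : ℝ → Matrix (Fin n) (Fin n) ℂ := fun t => W * diagonal (fun i => ((t + s i : ℝ) : ℂ)) * Wᴴ
  let Ai : ℝ → Matrix (Fin n) (Fin n) ℂ := fun t => W * diagonal (fun i => (((t + s i)⁻¹ : ℝ) : ℂ)) * Wᴴ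
  have hA : ∀ t, A t = σ + t • (1 : Matrix (Fin n) (Fin n) ℂ) := by
    intro t
    conv_rhs => rw [hσd, ← hW']
    simp only [A]
    have : (diagonal (fun i => ((t + s i : ℝ) : ℂ)) : Matrix (Fin n) (Fin n) ℂ) =
        diagonal (fun i => (s i : ℂ)) + t • 1 := by
      ext i j
      by_cases h : i = j
      · subst h; simp; ring
      · simp [h]
    rw [this, Matrix.mul_add, Matrix.add_mul, Matrix.mul_smul, Matrix.smul_mul, Matrix.mul_one]
  have hAAi : ∀ t, 0 < t → A t * Ai t = 1 := by
    intro t ht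
    simp only [A, Ai]
    rw [conjd_mul W hW]
    have : (fun i => (((t + s i) * (t + s i)⁻¹ : ℝ) : ℂ)) = fun _ => 1 := by
      funext i
      rw [mul_inv_cancel₀ (by linarith [hs i] : (0:ℝ) < t + s i).ne']; simp
    rw [this, Matrix.diagonal_one, Matrix.mul_one, hW']
  have hAiA : ∀ t, 0 < t → Ai t * A t = 1 := fun t ht => mul_eq_one_comm.1 (hAAi t ht)
  have hAip : ∀ t, 0 < t → (Ai t).PosSemidef := fun t ht =>
    conjd_psd _ _ fun i => inv_nonneg.2 (by linarith [hs i])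
  -- Z and its eigenvalues
  have hZp : ∀ t : ℝ, 0 < t → (K * Ai t * Kᴴ).PosSemidef := fun t ht =>
    (hAip t ht).mul_mul_conjTranspose_same K
  have hZh : ∀ t : ℝ, (K * Ai t * Kᴴ).IsHermitian := by
    intro t
    have : (Ai t).IsHermitian := conjd_herm _ _
    exact Matrix.isHermitian_mul_mul_conjTranspose K this
  choose U μ hU hU' hZd _ using fun t => exists_diag (hZh t)
  have hμ : ∀ t, 0 < t → ∀ j, 0 ≤ μ t j := fun t ht => diag_nonneg (hZp t ht) (hU t) (hZd t)
  -- ρ - γ σ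
  have hMh : ∀ γ : ℝ, (ρ - γ • σ).IsHermitian := by
    intro γ
    change (ρ - γ • σ)ᴴ = _
    rw [Matrix.conjTranspose_sub, Matrix.conjTranspose_smul, hρ.1.eq, hσ.1.eq]; simp
  choose Y l hY hY' hMd hMf using fun γ => exists_diag (hMh γ)
  set B := Vᴴ * W with hB
  have hBB : Bᴴ * B = 1 := by
    rw [hB, Matrix.conjTranspose_mul, Matrix.conjTranspose_conjTranspose, Matrix.mul_assoc,
      ← Matrix.mul_assoc V, hV', Matrix.one_mul, hW]
  have hBB' : B * Bᴴ = 1 := mul_eq_one_comm.1 hBB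
  let c : Fin n → ℝ := fun k => ∑ j, x j ^ α * ‖B j k‖ ^ 2
  have hc : ∀ k, 0 ≤ c k := fun k => Finset.sum_nonneg fun j _ =>
    mul_nonneg (Real.rpow_nonneg (hx j) _) (by positivity)
  have hcsum : ∑ k, c k = ∑ j, x j ^ α := by
    simp only [c]
    rw [Finset.sum_comm]
    refine Finset.sum_congr rfl fun j _ => ?_
    rw [← Finset.mul_sum, row_sum B hBB', mul_one]
  have hbd : ∀ t, 0 < t → ∑ j, μ t j ^ α ≤ ∑ k, c k * (s k ^ (α - 1) * (t + s k) ^ (-α)) := by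
    intro t ht
    let g : Fin n → ℝ := fun k => s k ^ (-e) * ((t + s k)⁻¹ * s k ^ (-e))
    have hts : ∀ k, 0 < t + s k := fun k => by linarith [hs k]
    have hg : ∀ k, 0 ≤ g k := fun k => mul_nonneg (Real.rpow_nonneg (hs k) _)
      (mul_nonneg (inv_nonneg.2 (hts k).le) (Real.rpow_nonneg (hs k) _))
    have hSAS : S * (Ai t * S) = W * diagonal (fun i => (g i : ℂ)) * Wᴴ := by
      simp only [Ai, hS]
      rw [conjd_mul W hW, conjd_mul W hW]
    have hAu : ((U t)ᴴ * V)ᴴ * ((U t)ᴴ * V) = 1 := by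
      rw [Matrix.conjTranspose_mul, Matrix.conjTranspose_conjTranspose, Matrix.mul_assoc,
        ← Matrix.mul_assoc (U t), hU', Matrix.one_mul, hV]
    have halt := alt_core ((U t)ᴴ * V) B hAu hBB (μ t) x g (hμ t ht) hx hg α hα ?_
    · refine halt.trans (le_of_eq ?_)
      rw [Finset.sum_comm]
      refine Finset.sum_congr rfl fun k _ => ?_
      rw [← Finset.sum_mul]
      congr 1
      simp only [g]
      have h1 : s k ^ (-e) * ((t + s k)⁻¹ * s k ^ (-e)) = s k ^ (-e + -e) * (t + s k)⁻¹ := by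
        rw [Real.rpow_add' (hs k) (by linarith)]; ring
      rw [h1, Real.mul_rpow (Real.rpow_nonneg (hs k) _) (inv_nonneg.2 (hts k).le),
        ← Real.rpow_mul (hs k), Real.inv_rpow (hts k).le, Real.rpow_neg (hts k).le]
      congr 2
      rw [he]; field_simp; ring
    · have hd : diagonal (fun i => (μ t i : ℂ)) = (U t)ᴴ * (K * Ai t * Kᴴ) * U t := by
        rw [hZd t]
        calc _ = ((U t)ᴴ * U t) * diagonal (fun i => (μ t i : ℂ)) * ((U t)ᴴ * U t) := by
              rw [hU, Matrix.one_mul, Matrix.mul_one]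
          _ = _ := by simp only [Matrix.mul_assoc]
      rw [hd, hKH, hK]
      calc (U t)ᴴ * (Q * S * Ai t * (S * Q)) * U t = (U t)ᴴ * Q * (S * (Ai t * S)) * Q * U t := by
            simp only [Matrix.mul_assoc]
        _ = _ := by
            rw [hSAS, hQ, hB]
            simp only [Matrix.conjTranspose_mul, Matrix.conjTranspose_conjTranspose, Matrix.mul_assoc]
  have hanti : ∀ γ γ' t, 0 < γ → γ ≤ γ' → 0 < t →
      Fintype.card {i // γ' * t < l γ' i} ≤ Fintype.card {i // γ * t < l γ i} := by
    intro γ γ' t hγ hγγ' ht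
    refine count_le (Y γ') (Y γ) 1 (l γ') (l γ) (hY γ') (hY' γ') (hY' γ) _ _ ?_
    intro v hv
    rw [← hMd, quad_sub_smul] at hv
    rw [Matrix.one_mulVec, ← hMd, quad_sub_smul]
    have h1 := psd_re hσ v
    have h2 : 0 ≤ (star v ⬝ᵥ v).re := by
      rw [quad_one W hW' v]; positivity
    have h3 : γ * t * (star v ⬝ᵥ v).re ≤ γ' * t * (star v ⬝ᵥ v).re := by gcongr
    have h4 : γ * (star v ⬝ᵥ σ *ᵥ v).re ≤ γ' * (star v ⬝ᵥ σ *ᵥ v).re := by gcongr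
    linarith
  have hcmp : ∀ γ t, 0 < γ → 0 < t →
      Fintype.card {i // γ * t < l γ i} ≤ Fintype.card {j // γ < μ t j} := by
    intro γ t hγ ht
    refine count_le (Y γ) (U t) K (l γ) (μ t) (hY γ) (hY' γ) (hU' t) _ _ ?_
    intro v hv
    rw [← hMd] at hv
    rw [← hZd]
    exact schur_step ρ σ K (A t) (Ai t) hρ.1 hKK t γ (hA t) (conjd_herm _ _) (hAAi t ht)
      (hAiA t ht) (hAip t ht) hγ v hv
  have hmain := abstract_bound α hα l μ c s hμ hc hs hanti hcmp hbd
  rw [hcsum] at hmain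
  -- conclude
  let d : ℝ → Fin n → ℝ := fun γ i => if 0 < l γ i then 1 else 0
  have hd0 : ∀ γ i, 0 ≤ d γ i := fun γ i => by simp only [d]; split_ifs <;> norm_num
  have hd1 : ∀ γ i, d γ i ≤ 1 := fun γ i => by simp only [d]; split_ifs <;> norm_num
  have hP : ∀ γ : ℝ, projPos (ρ - γ • σ) = Y γ * diagonal (fun i => (d γ i : ℂ)) * (Y γ)ᴴ :=
    fun γ => hMf γ _
  refine scaling_bound α hα (fun γ => ∑ i, max (l γ i) 0) _ (fun γ => by positivity) ?_ ?_ _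
    (Finset.sum_nonneg fun j _ => Real.rpow_nonneg (hx j) _) hmain
  · intro γ
    rw [hP]
    conv_rhs => rw [hσd]
    rw [trace_two]
    exact Finset.sum_nonneg fun i _ => Finset.sum_nonneg fun j _ =>
      mul_nonneg (mul_nonneg (hs i) (hd0 γ j)) (by positivity)
  · intro y γ
    have h1 : (Matrix.trace ((ρ - γ • σ) * projPos (ρ - γ • σ))).re = ∑ i, max (l γ i) 0 := by
      rw [hP]
      conv_lhs => rw [hMd γ]
      rw [conjd_mul _ (hY γ), Matrix.mul_assoc, Matrix.trace_mul_comm, Matrix.mul_assoc, hY,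
        Matrix.mul_one, Matrix.trace_diagonal, Complex.re_sum]
      refine Finset.sum_congr rfl fun i _ => ?_
      rw [Complex.ofReal_re]
      simp only [d]
      split_ifs with h
      · rw [mul_one, max_eq_left h.le]
      · rw [mul_zero, max_eq_right (not_lt.1 h)]
    have h2 : (Matrix.trace ((ρ - y • σ) * projPos (ρ - γ • σ))).re ≤ ∑ i, max (l y i) 0 := by
      rw [hP]
      conv_lhs => rw [hMd y]
      rw [trace_two]
      refine Finset.sum_le_sum fun i _ => ?_
      have hu : ((Y y)ᴴ * Y γ) * ((Y y)ᴴ * Y γ)ᴴ = 1 := by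
        rw [Matrix.conjTranspose_mul, Matrix.conjTranspose_conjTranspose, Matrix.mul_assoc,
          ← Matrix.mul_assoc (Y γ), hY', Matrix.one_mul, hY]
      calc _ ≤ ∑ j, max (l y i) 0 * ‖((Y y)ᴴ * Y γ) i j‖ ^ 2 := by
            refine Finset.sum_le_sum fun j _ => mul_le_mul_of_nonneg_right ?_ (by positivity)
            calc l y i * d γ j ≤ max (l y i) 0 * d γ j :=
                  mul_le_mul_of_nonneg_right (le_max_left _ _) (hd0 γ j)
              _ ≤ max (l y i) 0 := mul_le_of_le_one_right (le_max_right _ _) (hd1 γ j)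
        _ = _ := by rw [← Finset.mul_sum, row_sum _ hu, mul_one]
    have h3 : (Matrix.trace ((ρ - y • σ) * projPos (ρ - γ • σ))).re =
        (Matrix.trace ((ρ - γ • σ) * projPos (ρ - γ • σ))).re +
        (γ - y) * (Matrix.trace (σ * projPos (ρ - γ • σ))).re := by
      have : ρ - y • σ = (ρ - γ • σ) + (γ - y) • σ := by module
      conv_lhs => rw [this, Matrix.add_mul, Matrix.trace_add, Matrix.smul_mul, Matrix.trace_smul,
        Complex.add_re, Complex.smul_re, smul_eq_mul]
    rw [← h1]
    linarith
end
end
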